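/- (Lemma 4.1, bottom boundary separation.) Fix p, η, M^bot, M^side ∈ (0,∞), k ∈ ℕ and δ2 ∈ (0,1/2). There exist N5 ∈ ℕ, δ^sep > 0 and Δ^sep ∈ (0,δ2), depending on p, η, M^bot, M^side, k, δ2, such that the following holds for all integers n ≥ N5. Assume: x⃗, y⃗ ∈ 𝔚_k with |x_i| ≤ M^side·n^{1/2} and |y_i − p·n| ≤ M^side·n^{1/2} for all i ∈ ⟦1,k⟧; g : ⟦0,n⟧ → [−∞,∞) with g(s) ≤ p·s + M^bot·n^{1/2} for all s ∈ ⟦0,n⟧; Ω_Inter(0,n,x⃗,y⃗,∞,g) ≠ ∅; t0 ∈ [δ2, 1−δ2]; and set F_n(t0·n) = ℤ ∩ [t0·n − Δ^sep·n, t0·n + Δ^sep·n]. If (Q_1,…,Q_k) is distributed according to the uniform probability measure on Ω_Inter(0,n,x⃗,y⃗,∞,g) (paths extended by linear interpolation), then P( Q_k(t0·n) − p·t0·n ≥ g(s) − p·s + δ^sep·n^{1/2} for all s ∈ F_n(t0·n) ) > 1 − η. -/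

import Mathlib

open MeasureTheory Filter Topology ProbabilityTheory
open scoped ENNReal NNReal

/-- An increasing (integer) path on the integer interval `⟦T0, T1⟧`,
extended constantly to the rest of `ℤ`. -/
def IncrPath (T0 T1 : ℤ) (L : ℤ → ℤ) : Prop :=
  (∀ j : ℤ, T0 ≤ j → j < T1 → L j ≤ L (j + 1)) ∧
  (∀ s : ℤ, s ≤ T0 → L s = L T0) ∧ (∀ s : ℤ, T1 ≤ s → L s = L T1)

/-- The set `Ω(T0,T1,x,y)` of increasing paths from `(T0,x)` to `(T1,y)`. -/
def OmegaPath (T0 T1 : ℤ) (x y : ℤ) : Set (ℤ → ℤ) :=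
  {L | IncrPath T0 T1 L ∧ L T0 = x ∧ L T1 = y}

/-- Linear interpolation of a real-valued function defined on `ℤ`. -/
noncomputable def interp (f : ℤ → ℝ) (t : ℝ) : ℝ :=
  f ⌊t⌋ + (t - ⌊t⌋) * (f (⌊t⌋ + 1) - f ⌊t⌋)

/-- Linear interpolation of an integer-valued function on `ℤ`. -/
noncomputable def interpZ (L : ℤ → ℤ) : ℝ → ℝ :=
  interp fun s => (L s : ℝ)

lemma interp_eq_on (f : ℤ → ℝ) (n : ℤ) :
    ∀ t ∈ Set.Icc (n : ℝ) ((n : ℝ) + 1),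
      interp f t = f n + (t - n) * (f (n + 1) - f n) := by
  intro t ht
  rcases lt_or_eq_of_le ht.2 with h | h
  · have hfl : ⌊t⌋ = n := by
      rw [Int.floor_eq_iff]
      · exact ⟨ht.1, by exact_mod_cast h⟩
    simp [interp, hfl]
  · have hfl : ⌊t⌋ = n + 1 := by
      rw [h, show ((n : ℝ) + 1) = ((n + 1 : ℤ) : ℝ) by push_cast; ring, Int.floor_intCast]
    rw [interp, hfl, h]
    push_cast
    ring

lemma continuous_interp (f : ℤ → ℝ) : Continuous (interp f) := by
  have hcov : (⋃ n : ℤ, Set.Icc (n : ℝ) ((n : ℝ) + 1)) = Set.univ := by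
    ext t
    simp only [Set.mem_iUnion, Set.mem_univ, iff_true, Set.mem_Icc]
    exact ⟨⌊t⌋, Int.floor_le t, (Int.lt_floor_add_one t).le⟩
  have hlf : LocallyFinite fun n : ℤ => Set.Icc (n : ℝ) ((n : ℝ) + 1) := by
    intro x
    refine ⟨Set.Ioo (x - 1) (x + 1), Ioo_mem_nhds (by linarith) (by linarith), ?_⟩
    apply Set.Finite.subset (Set.finite_Icc (⌊x⌋ - 2) (⌊x⌋ + 2))
    rintro n ⟨t, ht1, ht2⟩
    simp only [Set.mem_Icc] at ht1 ⊢
    simp only [Set.mem_Ioo] at ht2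
    constructor
    · have h1 : ((⌊x⌋ - 2 : ℤ) : ℝ) < n := by
        push_cast
        have := Int.floor_le x
        linarith [ht1.2, ht2.1]
      exact_mod_cast h1.le
    · have h2 : (n : ℝ) < ((⌊x⌋ + 2 : ℤ) : ℝ) := by
        push_cast
        have := Int.lt_floor_add_one x
        linarith [ht1.1, ht2.2]
      exact_mod_cast h2.le
  refine hlf.continuous hcov (fun n => isClosed_Icc) (fun n => ?_)
  have hc : ContinuousOn (fun t : ℝ => f n + (t - n) * (f (n + 1) - f n))
      (Set.Icc (n : ℝ) ((n : ℝ) + 1)) := (by continuity : Continuous _).continuousOn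
  exact hc.congr (interp_eq_on f n)

/-- The set `Ω_Inter(T0,T1,x⃗,y⃗,f,g)` of `k`-tuples of increasing paths with prescribed
entrance and exit data, interlacing with each other and with the boundary functions
`f` (above) and `g` (below). -/
def OmegaInter (T0 T1 : ℤ) {k : ℕ} (x y : Fin k → ℤ) (f g : ℤ → EReal) :
    Set (Fin k → ℤ → ℤ) :=
  {Q | (∀ i, IncrPath T0 T1 (Q i)) ∧ (∀ i, Q i T0 = x i) ∧ (∀ i, Q i T1 = y i) ∧
    ∀ r : ℤ, T0 < r → r ≤ T1 →
      (∀ i : Fin k, (i : ℕ) = 0 → ((Q i r : ℝ) : EReal) ≤ f (r - 1)) ∧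
      (∀ i j : Fin k, (j : ℕ) = (i : ℕ) + 1 → Q j r ≤ Q i (r - 1)) ∧
      (∀ i : Fin k, (i : ℕ) = k - 1 → g r ≤ ((Q i (r - 1) : ℝ) : EReal))}

/-- The random variable `X` is uniformly distributed on the (finite) set `S` under `P`. -/
def UniformOn {Ω E : Type*} [MeasurableSpace Ω] (P : Measure Ω) (X : Ω → E)
    (S : Set E) : Prop :=
  (∀ ω, X ω ∈ S) ∧ ∀ Q ∈ S, P {ω | X ω = Q} = ((Nat.card S : ℝ≥0∞))⁻¹



/-! ### Ahlswede-Daykin for sets -/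

lemma ad_sets {α : Type*} [DistribLattice α] {A B C D : Set α}
    (hA : A.Finite) (hB : B.Finite) (hC : C.Finite) (hD : D.Finite)
    (h1 : ∀ a ∈ A, ∀ b ∈ B, a ⊓ b ∈ C) (h2 : ∀ a ∈ A, ∀ b ∈ B, a ⊔ b ∈ D) :
    A.ncard * B.ncard ≤ C.ncard * D.ncard := by
  classical
  rw [Set.ncard_eq_toFinset_card A hA, Set.ncard_eq_toFinset_card B hB,
    Set.ncard_eq_toFinset_card C hC, Set.ncard_eq_toFinset_card D hD]
  refine (Finset.le_card_infs_mul_card_sups _ _).trans ?_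
  refine Nat.mul_le_mul (Finset.card_le_card ?_) (Finset.card_le_card ?_)
  · intro x hx
    obtain ⟨a, ha, b, hb, rfl⟩ := Finset.mem_infs.1 hx
    simp only [Set.Finite.mem_toFinset] at *
    exact h1 a ha b hb
  · intro x hx
    obtain ⟨a, ha, b, hb, rfl⟩ := Finset.mem_sups.1 hx
    simp only [Set.Finite.mem_toFinset] at *
    exact h2 a ha b hb

lemma ncard_fiber {α β : Type*} [DecidableEq β] (A : Set α) (hA : A.Finite) (f : α → β)
    (t : Finset β) (h : ∀ a ∈ A, f a ∈ t) :
    A.ncard = ∑ b ∈ t, {a ∈ A | f a = b}.ncard := by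
  classical
  rw [Set.ncard_eq_toFinset_card A hA,
    Finset.card_eq_sum_card_fiberwise (f := f) (t := t) (by intro a ha; simpa using h a (by simpa using ha))]
  refine Finset.sum_congr rfl fun b _ => ?_
  rw [← Set.ncard_coe_finset]
  congr 1
  ext a; simp

/-! ### Single paths with a pointwise constraint -/

/-- Monotone paths on `⟦T0,T1⟧` from `z` to `w`, equal to `c` elsewhere, satisfying `φ` pointwise. -/
def PP (c T0 T1 z w : ℤ) (φ : ℤ → ℤ → Prop) : Set (ℤ → ℤ) :=
  {Q | (∀ j, T0 ≤ j → j < T1 → Q j ≤ Q (j + 1)) ∧ Q T0 = z ∧ Q T1 = w ∧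
    (∀ s, (s < T0 ∨ T1 < s) → Q s = c) ∧ ∀ r, T0 ≤ r → r ≤ T1 → φ r (Q r)}

lemma step_mono {T0 T1 : ℤ} {Q : ℤ → ℤ} (h : ∀ j, T0 ≤ j → j < T1 → Q j ≤ Q (j + 1))
    {a b : ℤ} (ha : T0 ≤ a) (hab : a ≤ b) (hb : b ≤ T1) : Q a ≤ Q b := by
  induction b, hab using Int.leInduction with
  | base => exact le_rfl
  | succ b hab ih => exact (ih (by omega)).trans (h b (by omega) (by omega))

lemma finite_paths (T0 T1 lo hi : ℤ) (A : Set (ℤ → ℤ))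
    (h1 : ∀ Q ∈ A, ∀ s, T0 ≤ s → s ≤ T1 → lo ≤ Q s ∧ Q s ≤ hi)
    (h2 : ∀ Q ∈ A, ∀ Q' ∈ A, (∀ s, T0 ≤ s → s ≤ T1 → Q s = Q' s) → Q = Q') : A.Finite := by
  refine Set.Finite.of_injOn (f := fun Q : ℤ → ℤ => fun s : Set.Icc T0 T1 => Q s)
    (t := {f | ∀ s, f s ∈ Set.Icc lo hi}) ?_ ?_ (Set.Finite.pi' fun _ => Set.finite_Icc _ _)
  · intro Q hQ s
    exact h1 Q hQ s s.2.1 s.2.2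
  · intro Q hQ Q' hQ' h
    exact h2 Q hQ Q' hQ' fun s hs hs' => congrFun h ⟨s, hs, hs'⟩

lemma PP_finite (c T0 T1 z w : ℤ) (φ : ℤ → ℤ → Prop) : (PP c T0 T1 z w φ).Finite := by
  refine finite_paths T0 T1 z w _ ?_ ?_
  · rintro Q ⟨h, rfl, rfl, -, -⟩ s hs hs'
    exact ⟨step_mono h le_rfl hs hs', step_mono h hs hs' le_rfl⟩
  · rintro Q ⟨-, -, -, h, -⟩ Q' ⟨-, -, -, h', -⟩ H
    ext s
    by_cases hs : T0 ≤ s ∧ s ≤ T1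
    · exact H s hs.1 hs.2
    · have : s < T0 ∨ T1 < s := by omega
      rw [h s this, h' s this]

lemma PP_mono (c T0 T1 z w : ℤ) {φ ψ : ℤ → ℤ → Prop}
    (h : ∀ r q, T0 ≤ r → r ≤ T1 → φ r q → ψ r q) : PP c T0 T1 z w φ ⊆ PP c T0 T1 z w ψ :=
  fun _ ⟨h1, h2, h3, h4, h5⟩ => ⟨h1, h2, h3, h4, fun r hr hr' => h r _ hr hr' (h5 r hr hr')⟩

lemma PP_concat (c T0 T1 T2 z ζ w : ℤ) (φ : ℤ → ℤ → Prop) (h01 : T0 ≤ T1) (h12 : T1 ≤ T2) :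
    {Q ∈ PP c T0 T2 z w φ | Q T1 = ζ}.ncard
      = (PP c T0 T1 z ζ φ).ncard * (PP c T1 T2 ζ w φ).ncard := by
  rw [← Set.ncard_prod]
  refine Set.BijOn.ncard_eq (f := fun Q : ℤ → ℤ =>
    ((fun s => if s ≤ T1 then Q s else c), (fun s => if T1 ≤ s then Q s else c))) ?_
  refine Set.InvOn.bijOn (f' := fun p : (ℤ → ℤ) × (ℤ → ℤ) =>
    fun s => if s ≤ T1 then p.1 s else p.2 s) ⟨?_, ?_⟩ ?_ ?_
  · rintro Q ⟨⟨h1, h2, h3, h4, h5⟩, h6⟩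
    ext s
    try dsimp only
    split_ifs <;> first | rfl | omega
  · rintro ⟨Q1, Q2⟩ ⟨⟨h1, h2, h3, h4, h5⟩, ⟨h1', h2', h3', h4', h5'⟩⟩
    dsimp only at *
    refine Prod.ext ?_ ?_
    · ext s
      try dsimp only
      split_ifs with hs
      · rfl
      · rw [h4 s (by omega)]
    · ext s
      try dsimp only
      split_ifs with hs hs'
      · have : s = T1 := by omega
        rw [this, h3, h2']
      · rfl
      · rw [h4' s (by omega)]
  · rintro Q ⟨⟨h1, h2, h3, h4, h5⟩, h6⟩
    refine ⟨⟨?_, ?_, ?_, ?_, ?_⟩, ⟨?_, ?_, ?_, ?_, ?_⟩⟩ <;> dsimp only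
    · intro j hj hj'
      rw [if_pos (by omega), if_pos (by omega)]; exact h1 j hj (by omega)
    · rw [if_pos h01, h2]
    · rw [if_pos le_rfl, h6]
    · intro s hs
      split_ifs with h
      · exact h4 s (by omega)
      · rfl
    · intro r hr hr'
      rw [if_pos hr']; exact h5 r hr (by omega)
    · intro j hj hj'
      rw [if_pos (by omega), if_pos (by omega)]; exact h1 j (by omega) (by omega)
    · rw [if_pos le_rfl, h6]
    · rw [if_pos h12, h3]
    · intro s hs
      split_ifs with h
      · exact h4 s (by omega)
      · rfl
    · intro r hr hr'
      rw [if_pos hr]; exact h5 r (by omega) (by omega)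
  · rintro ⟨Q1, Q2⟩ ⟨⟨h1, h2, h3, h4, h5⟩, ⟨h1', h2', h3', h4', h5'⟩⟩
    dsimp only at *
    refine ⟨⟨?_, ?_, ?_, ?_, ?_⟩, ?_⟩
    · intro j hj hj'
      try dsimp only
      by_cases hc : j + 1 ≤ T1
      · rw [if_pos (by omega), if_pos hc]; exact h1 j hj (by omega)
      · rw [if_neg hc]
        split_ifs with hs
        · have : j = T1 := by omega
          rw [this, h3, ← h2']; exact h1' T1 le_rfl (by omega)
        · exact h1' j (by omega) hj'
    · dsimp only
      rw [if_pos h01, h2]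
    · dsimp only
      split_ifs with h
      · have : T2 = T1 := by omega
        rw [this, h3, ← h2', ← h3', this]
      · exact h3'
    · intro s hs
      try dsimp only
      split_ifs with h
      · exact h4 s (by omega)
      · exact h4' s (by omega)
    · intro r hr hr'
      try dsimp only
      split_ifs with h
      · exact h5 r hr h
      · exact h5' r (by omega) hr'
    · dsimp only
      rw [if_pos le_rfl, h3]

lemma PP_point (c T z w : ℤ) (φ : ℤ → ℤ → Prop) :
    (PP c T T z w φ).ncard ≤ 1 ∧ (z = w → φ T z → (PP c T T z w φ).ncard = 1) ∧
      (z ≠ w → (PP c T T z w φ).ncard = 0) ∧ (¬ φ T z → (PP c T T z w φ).ncard = 0) := by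
  have key : ∀ Q ∈ PP c T T z w φ, Q = fun s => if s = T then z else c := by
    rintro Q ⟨h1, h2, h3, h4, h5⟩
    ext s
    try dsimp only
    split_ifs with h
    · rw [h, h2]
    · exact h4 s (by omega)
  refine ⟨?_, ?_, ?_, ?_⟩
  · rw [Set.ncard_le_one (PP_finite ..)]
    intro a ha b hb
    rw [key a ha, key b hb]
  · intro h hφ
    rw [Set.ncard_eq_one]
    refine ⟨fun s => if s = T then z else c, Set.eq_singleton_iff_unique_mem.2 ⟨?_, key⟩⟩
    refine ⟨fun j _ _ => by omega, by simp, by simp [h], fun s hs => by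
      dsimp only; rw [if_neg (by omega)], fun r hr hr' => ?_⟩
    have : r = T := by omega
    simpa [this] using hφ
  · intro h
    rw [Set.ncard_eq_zero (PP_finite ..)]
    refine Set.eq_empty_of_forall_notMem ?_
    rintro Q ⟨h1, h2, h3, h4, h5⟩
    exact h (h2.symm.trans h3)
  · intro h
    rw [Set.ncard_eq_zero (PP_finite ..)]
    refine Set.eq_empty_of_forall_notMem ?_
    rintro Q ⟨h1, h2, h3, h4, h5⟩
    exact h (h2 ▸ h5 T le_rfl le_rfl)

lemma PP_step_one (c T z w : ℤ) (φ : ℤ → ℤ → Prop) (hzw : z ≤ w) (h1 : φ T z) (h2 : φ (T + 1) w) :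
    (PP c T (T + 1) z w φ).ncard = 1 := by
  rw [Set.ncard_eq_one]
  refine ⟨fun s => if s = T then z else if s = T + 1 then w else c,
    Set.eq_singleton_iff_unique_mem.2 ⟨?_, ?_⟩⟩
  · refine ⟨fun j hj hj' => ?_, by simp, by simp, fun s hs => ?_, fun r hr hr' => ?_⟩
    · have : j = T := by omega
      simp [this, hzw]
    · dsimp only
      rw [if_neg (by omega), if_neg (by omega)]
    · dsimp only
      rcases (by omega : r = T ∨ r = T + 1) with rfl | rfl
      · simpa using h1
      · simpa using h2
  · rintro Q ⟨h1, h2, h3, h4, h5⟩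
    ext s
    try dsimp only
    split_ifs with h h'
    · rw [h, h2]
    · rw [h', h3]
    · exact h4 s (by omega)

lemma PP_not_start (c T0 T1 z w : ℤ) (φ : ℤ → ℤ → Prop) (h01 : T0 ≤ T1) (h : ¬ φ T0 z) :
    (PP c T0 T1 z w φ).ncard = 0 := by
  rw [Set.ncard_eq_zero (PP_finite ..)]
  refine Set.eq_empty_of_forall_notMem ?_
  rintro Q ⟨h1, h2, h3, h4, h5⟩
  exact h (h2 ▸ h5 T0 le_rfl h01)

/-- First-step decomposition. -/
lemma PP_succ (c T1 w : ℤ) (φ : ℤ → ℤ → Prop) (l m : ℕ) (hφ : φ (T1 - (l + 1 : ℕ)) (w - m)) :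
    (PP c (T1 - (l + 1 : ℕ)) T1 (w - m) w φ).ncard
      = ∑ m' ∈ Finset.range (m + 1), (PP c (T1 - l) T1 (w - m') w φ).ncard := by
  rw [ncard_fiber _ (PP_finite ..) (fun Q => (w - Q (T1 - l)).toNat) (Finset.range (m + 1)) ?_]
  · refine Finset.sum_congr rfl fun m' hm' => ?_
    have hm'' : m' ≤ m := by have := Finset.mem_range.1 hm'; omega
    have : {a ∈ PP c (T1 - (l + 1 : ℕ)) T1 (w - m) w φ | (w - a (T1 - l)).toNat = m'}
        = {a ∈ PP c (T1 - (l + 1 : ℕ)) T1 (w - m) w φ | a (T1 - l) = w - m'} := by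
      ext Q
      simp only [Set.mem_ofPred_eq, and_congr_right_iff]
      rintro ⟨h1, h2, h3, h4, h5⟩
      have := step_mono h1 (a := T1 - l) (b := T1) (by push_cast; omega) (by omega) le_rfl
      omega
    rw [this, PP_concat _ _ _ _ _ _ _ _ (by push_cast; omega) (by omega)]
    by_cases hq : φ (T1 - l) (w - m')
    · have e : T1 - (l : ℤ) = T1 - ((l + 1 : ℕ) : ℤ) + 1 := by push_cast; ring
      rw [e] at hq ⊢
      rw [PP_step_one _ _ _ _ _ (by omega) hφ hq, one_mul]
    · rw [PP_not_start c (T1 - l) T1 _ _ φ (by omega) hq, mul_zero]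
  · rintro Q ⟨h1, h2, h3, h4, h5⟩
    have := step_mono h1 (a := T1 - (l + 1 : ℕ)) (b := T1 - l) le_rfl (by push_cast; omega) (by omega)
    simp only [Finset.mem_range]
    omega


/-! ### Multichoose moments -/

lemma mc_ratio (l m : ℕ) : ((m : ℝ) + 1) * (Nat.multichoose l (m + 1) : ℝ)
    = (l + m) * (Nat.multichoose l m : ℝ) := by
  rcases l with _ | l
  · rcases m with _ | m <;> simp
  · rw [Nat.multichoose_eq, Nat.multichoose_eq]
    have h := Nat.add_one_mul_choose_eq (l + m) m
    have e1 : l + 1 + (m + 1) - 1 = l + m + 1 := by omega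
    have e2 : l + 1 + m - 1 = l + m := by omega
    rw [e1, e2]
    have h' : ((l : ℝ) + m + 1) * ((l + m).choose m : ℝ) = ((l + m + 1).choose (m + 1) : ℝ) * (m + 1) := by
      exact_mod_cast h
    push_cast
    linarith

lemma mc_up (l m : ℕ) : ((m : ℝ) + 1) * (Nat.multichoose l (m + 1) : ℝ)
    = l * (Nat.multichoose (l + 1) m : ℝ) := by
  have h1 := mc_ratio l m
  have h2 := mc_ratio (l + 1) m
  have h3 : (Nat.multichoose (l + 1) (m + 1) : ℝ)
      = Nat.multichoose l (m + 1) + Nat.multichoose (l + 1) m := by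
    exact_mod_cast Nat.multichoose_succ_succ l m
  rw [h3] at h2
  push_cast at h2
  linarith

lemma mc_sum0 (l m : ℕ) : ∑ m' ∈ Finset.range (m + 1), Nat.multichoose l m' = Nat.multichoose (l + 1) m := by
  induction m with
  | zero => simp
  | succ m ih => rw [Finset.sum_range_succ, ih, Nat.multichoose_succ_succ, add_comm]

lemma mc_sum1 (l m : ℕ) : ((l : ℝ) + 1) * ∑ m' ∈ Finset.range (m + 1), (m' : ℝ) * (Nat.multichoose l m' : ℝ)
    = m * l * Nat.multichoose (l + 1) m := by
  induction m with
  | zero => simp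
  | succ m ih =>
    rw [Finset.sum_range_succ, mul_add, ih]
    have h1 := mc_up l m
    have h2 := mc_ratio (l + 1) m
    push_cast at h2 ⊢
    rw [h1]
    linear_combination (-(l : ℝ)) * h2

lemma mc_sum2 (l m : ℕ) : ((l : ℝ) + 2) *
    ∑ m' ∈ Finset.range (m + 1), (m' : ℝ) * (m' - 1) * (Nat.multichoose l m' : ℝ)
    = m * (m - 1) * l * Nat.multichoose (l + 1) m := by
  induction m with
  | zero => simp
  | succ m ih =>
    rw [Finset.sum_range_succ, mul_add, ih]
    have h1 := mc_up l m
    have h2 := mc_ratio (l + 1) m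
    push_cast at h2 ⊢
    linear_combination (-(l : ℝ) * m) * h2 + ((l : ℝ) + 2) * m * h1

/-- Variance proxy. -/
noncomputable def sg (q : ℝ) : ℝ := 2 * q ^ 2 + 2 * q + 1

lemma step_ineq (q l m : ℝ) (hl : 0 ≤ l) :
    m * (m - 1) * l / (l + 2) + m * l / (l + 1) - 2 * q * l * (m * l / (l + 1)) + q ^ 2 * l ^ 2 + sg q * l
      ≤ (m - q * (l + 1)) ^ 2 + sg q * (l + 1) := by
  obtain ⟨β, rfl⟩ : ∃ β, m = (q + β) * (l + 1) := ⟨m / (l + 1) - q, by field_simp; ring⟩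
  have h1 : (0 : ℝ) < l + 2 := by linarith
  have h2 : (0 : ℝ) < l + 1 := by linarith
  rw [← sub_nonneg]
  have : (((q + β) * (l + 1) - q * (l + 1)) ^ 2 + sg q * (l + 1) -
      ((q + β) * (l + 1) * ((q + β) * (l + 1) - 1) * l / (l + 2) + (q + β) * (l + 1) * l / (l + 1) - 2 * q * l * ((q + β) * (l + 1) * l / (l + 1)) + q ^ 2 * l ^ 2 + sg q * l))
      = (l * (β - (2 * q + 1) / 2) ^ 2 + (2 * (l + 1) ^ 2 - l) * β ^ 2 + sg q * (l + 2) - l * (2 * q ^ 2 + 2 * q + 1 / 4)) / (l + 2) := by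
    field_simp
    ring
  rw [this]
  apply div_nonneg _ h1.le
  have a1 : 0 ≤ l * (β - (2 * q + 1) / 2) ^ 2 := by positivity
  have a2 : 0 ≤ (2 * (l + 1) ^ 2 - l) * β ^ 2 := by
    apply mul_nonneg _ (sq_nonneg _); nlinarith
  have a3 : 0 ≤ sg q := by unfold sg; nlinarith [sq_nonneg (q + 1)]
  have a4 : sg q * (l + 2) - l * (2 * q ^ 2 + 2 * q + 1 / 4) = 2 * sg q + l * (3 / 4) := by
    unfold sg; ring
  linarith [mul_nonneg hl (by norm_num : (0 : ℝ) ≤ 3 / 4)]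

lemma PP_card (c T1 w : ℤ) (l m : ℕ) :
    (PP c (T1 - l) T1 (w - m) w (fun _ _ => True)).ncard = Nat.multichoose l m := by
  induction l generalizing m with
  | zero =>
    have := PP_point c T1 (w - m) w (fun _ _ => True)
    simp only [Nat.cast_zero, sub_zero]
    rcases m with _ | m
    · simpa using this.2.1
    · rw [this.2.2.1 (by push_cast; omega)]; simp
  | succ l ih =>
    rw [PP_succ _ _ _ _ _ _ trivial, ← mc_sum0]
    exact Finset.sum_congr rfl fun m' _ => ih m'

/-- The maximal inequality for uniform monotone paths, by backward induction. -/
lemma PP_tube (c T1 w : ℤ) (q D : ℝ) (hD : 0 < D) (l m : ℕ) :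
    (D ^ 2 - (m - q * l) ^ 2 - sg q * l) * (Nat.multichoose l m : ℝ)
      ≤ D ^ 2 * ((PP c (T1 - l) T1 (w - m) w
          (fun r v => |(w : ℝ) - v - q * (T1 - r)| < D)).ncard : ℝ) := by
  have a3 : 0 ≤ sg q := by unfold sg; nlinarith [sq_nonneg (q + 1)]
  induction l generalizing m with
  | zero =>
    have := PP_point c T1 (w - m) w (fun r v => |(w : ℝ) - v - q * (T1 - r)| < D)
    simp only [Nat.cast_zero, sub_zero]
    rcases m with _ | m
    · rw [this.2.1 (by simp) (by simpa using hD)]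
      simp
    · simp
      positivity
  | succ l ih =>
    by_cases h : |(m : ℝ) - q * (l + 1 : ℕ)| < D
    · rw [PP_succ]
      · push_cast
        rw [Finset.mul_sum]
        refine le_trans ?_ (Finset.sum_le_sum fun m' _ => ih m')
        set W := (Nat.multichoose (l + 1) m : ℝ) with hW
        have hW0 : 0 ≤ W := by positivity
        have s0 : ∑ m' ∈ Finset.range (m + 1), (Nat.multichoose l m' : ℝ) = W := by
          rw [hW, ← mc_sum0]; push_cast; rfl
        have s1 : ∑ m' ∈ Finset.range (m + 1), (m' : ℝ) * (Nat.multichoose l m' : ℝ) = m * l / (l + 1) * W := by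
          have := mc_sum1 l m
          have h0 : (l : ℝ) + 1 ≠ 0 := by positivity
          field_simp
          linarith
        have s2 : ∑ m' ∈ Finset.range (m + 1), (m' : ℝ) * (m' - 1) * (Nat.multichoose l m' : ℝ)
            = m * (m - 1) * l / (l + 2) * W := by
          have := mc_sum2 l m
          have h0 : (l : ℝ) + 2 ≠ 0 := by positivity
          field_simp
          linarith
        have e : ∑ m' ∈ Finset.range (m + 1), (D ^ 2 - ((m' : ℝ) - q * l) ^ 2 - sg q * l) * (Nat.multichoose l m' : ℝ)
            = (D ^ 2 - (q ^ 2 * l ^ 2 + sg q * l)) * W - m * (m - 1) * l / (l + 2) * W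
              - (1 - 2 * q * l) * (m * l / (l + 1) * W) := by
          rw [← s2, ← s1, ← s0, Finset.mul_sum, Finset.mul_sum, ← Finset.sum_sub_distrib, ← Finset.sum_sub_distrib]
          refine Finset.sum_congr rfl fun m' _ => ?_
          ring
        rw [e]
        have := mul_le_mul_of_nonneg_right (step_ineq q l m (by positivity)) hW0
        linarith
      · have : ((w : ℝ) - ((w - m : ℤ) : ℝ) - q * (T1 - ((T1 - (l + 1 : ℕ) : ℤ) : ℝ))) = m - q * (l + 1 : ℕ) := by
          push_cast; ring
        rw [this]; exact h
    · push Not at h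
      have h2 : D ^ 2 ≤ ((m : ℝ) - q * (l + 1 : ℕ)) ^ 2 := by
        rw [← sq_abs (_ - _)]; exact pow_le_pow_left₀ hD.le h 2
      have : (D ^ 2 - ((m : ℝ) - q * (l + 1 : ℕ)) ^ 2 - sg q * (l + 1 : ℕ)) ≤ 0 := by
        have : 0 ≤ sg q * (l + 1 : ℕ) := by positivity
        linarith
      refine le_trans (mul_nonpos_of_nonpos_of_nonneg this (by positivity)) (by positivity)


/-! ### Ensembles -/

/-- The ensemble with no upper boundary. -/
abbrev Om {k : ℕ} (n : ℕ) (x y : Fin k → ℤ) (g : ℤ → EReal) : Set (Fin k → ℤ → ℤ) :=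
  OmegaInter 0 n x y (fun _ => (⊤ : EReal)) g

lemma mem_om {k n : ℕ} {x y : Fin k → ℤ} {g : ℤ → EReal} {Q : Fin k → ℤ → ℤ} :
    Q ∈ Om n x y g ↔ (∀ i, IncrPath 0 n (Q i)) ∧ (∀ i, Q i 0 = x i) ∧ (∀ i, Q i n = y i) ∧
      (∀ r : ℤ, 0 < r → r ≤ n → ∀ i j : Fin k, (j : ℕ) = (i : ℕ) + 1 → Q j r ≤ Q i (r - 1)) ∧
      (∀ r : ℤ, 0 < r → r ≤ n → ∀ i : Fin k, (i : ℕ) = k - 1 → g r ≤ ((Q i (r - 1) : ℝ) : EReal)) := by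
  constructor
  · rintro ⟨h1, h2, h3, h4⟩
    exact ⟨h1, h2, h3, fun r hr hr' => (h4 r hr hr').2.1, fun r hr hr' => (h4 r hr hr').2.2⟩
  · rintro ⟨h1, h2, h3, h4, h5⟩
    exact ⟨h1, h2, h3, fun r hr hr' => ⟨fun _ _ => le_top, h4 r hr hr', h5 r hr hr'⟩⟩

lemma incr_mono {n : ℕ} {L : ℤ → ℤ} (h : IncrPath 0 n L) : Monotone L := by
  refine monotone_int_of_le_succ fun j => ?_
  obtain ⟨h1, h2, h3⟩ := h
  rcases lt_or_ge j 0 with hj | hj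
  · rw [h2 j hj.le, h2 (j + 1) (by omega)]
  · rcases lt_or_ge j n with hj' | hj'
    · exact h1 j hj hj'
    · rw [h3 j hj', h3 (j + 1) (by omega)]

lemma om_finite {k : ℕ} (n : ℕ) (x y : Fin k → ℤ) (g : ℤ → EReal) : (Om n x y g).Finite := by
  refine Set.Finite.subset (s := {Q | ∀ i, Q i ∈ {L : ℤ → ℤ | IncrPath 0 n L ∧ L 0 = x i ∧ L n = y i}})
    (Set.Finite.pi' fun i => ?_) ?_
  · refine finite_paths 0 n (x i) (y i) _ ?_ ?_
    · rintro L ⟨h1, h2, h3⟩ s hs hs'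
      rw [← h2, ← h3]
      exact ⟨incr_mono h1 hs, incr_mono h1 hs'⟩
    · rintro L ⟨h1, h2, h3⟩ L' ⟨h1', h2', h3'⟩ H
      ext s
      rcases lt_or_ge s 0 with hs | hs
      · rw [h1.2.1 s hs.le, h1'.2.1 s hs.le, h2, h2']
      · rcases lt_or_ge (n : ℤ) s with hs' | hs'
        · rw [h1.2.2 s hs'.le, h1'.2.2 s hs'.le, h3, h3']
        · exact H s hs hs'
  · intro Q hQ i
    obtain ⟨h1, h2, h3, -⟩ := mem_om.1 hQ
    exact ⟨h1 i, h2 i, h3 i⟩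

lemma om_order {k n : ℕ} {x y : Fin k → ℤ} {g : ℤ → EReal} (hx : ∀ i j : Fin k, i ≤ j → x j ≤ x i)
    {Q : Fin k → ℤ → ℤ} (hQ : Q ∈ Om n x y g) {s : ℤ} (hs : 0 ≤ s) (hs' : s ≤ n)
    (i j : Fin k) (hij : i ≤ j) : Q j s ≤ Q i s := by
  obtain ⟨h1, h2, h3, h4, h5⟩ := mem_om.1 hQ
  rcases hs.eq_or_lt with rfl | hs0
  · rw [h2, h2]; exact hx i j hij
  · obtain ⟨j, hj⟩ := j
    obtain ⟨i, hi⟩ := i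
    have hij' : i ≤ j := hij
    clear hij
    induction j, hij' using Nat.le_induction with
    | base => exact le_rfl
    | succ j hij ih =>
      have a1 := h4 s hs0 hs' ⟨j, by omega⟩ ⟨j + 1, hj⟩ rfl
      have a2 := incr_mono (h1 ⟨j, by omega⟩) (by omega : s - 1 ≤ s)
      exact (a1.trans a2).trans (ih (by omega))

lemma ncard_pi_le {k : ℕ} (A : Fin k → Set (ℤ → ℤ)) (hA : ∀ i, (A i).Finite) :
    {Q : Fin k → ℤ → ℤ | ∀ i, Q i ∈ A i}.ncard = ∏ i, (A i).ncard := by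
  classical
  have : {Q : Fin k → ℤ → ℤ | ∀ i, Q i ∈ A i} = ↑(Fintype.piFinset fun i => (hA i).toFinset) := by
    ext Q; simp
  rw [this, Set.ncard_coe_finset, Fintype.card_piFinset]
  exact Finset.prod_congr rfl fun i _ => (Set.ncard_eq_toFinset_card _ (hA i)).symm

/-- Log-concavity of the survival function of one coordinate. -/
lemma log_concave {k n : ℕ} (x y : Fin k → ℤ) (g : ℤ → EReal) (i0 : Fin k) (t v : ℤ) (c : ℕ) :
    {Q ∈ Om n x y g | v ≤ Q i0 t}.ncard * {Q ∈ Om n x y g | v + 2 * c ≤ Q i0 t}.ncard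
      ≤ {Q ∈ Om n x y g | v + c ≤ Q i0 t}.ncard * {Q ∈ Om n x y g | v + c ≤ Q i0 t}.ncard := by
  have hfin := om_finite n x y g
  let sh : (Fin k → ℤ → ℤ) → (Fin k → ℤ → ℤ) := fun Q i s => Q i s + c
  have hsh : Function.Injective sh := by
    intro Q Q' h
    ext i s
    have := congrFun (congrFun h i) s
    simpa [sh] using this
  have hc : (0 : ℤ) ≤ c := by positivity
  have e1 := (hsh.injOn (s := {Q ∈ Om n x y g | v ≤ Q i0 t})).ncard_image
  have e2 := (hsh.injOn (s := {Q ∈ Om n x y g | v + c ≤ Q i0 t})).ncard_image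
  suffices H : (sh '' {Q ∈ Om n x y g | v ≤ Q i0 t}).ncard * {Q ∈ Om n x y g | v + 2 * c ≤ Q i0 t}.ncard
      ≤ {Q ∈ Om n x y g | v + c ≤ Q i0 t}.ncard * (sh '' {Q ∈ Om n x y g | v + c ≤ Q i0 t}).ncard by
    rwa [e1, e2] at H
  refine ad_sets ((hfin.subset (Set.sep_subset _ _)).image _) (hfin.subset (Set.sep_subset _ _))
    (hfin.subset (Set.sep_subset _ _)) ((hfin.subset (Set.sep_subset _ _)).image _) ?_ ?_
  · rintro _ ⟨a, ⟨ha, hat⟩, rfl⟩ b ⟨hb, hbt⟩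
    obtain ⟨h1, h2, h3, h4, h5⟩ := mem_om.1 ha
    obtain ⟨h1', h2', h3', h4', h5'⟩ := mem_om.1 hb
    refine ⟨mem_om.2 ⟨fun i => ⟨fun j hj hj' => ?_, fun s hs => ?_, fun s hs => ?_⟩, fun i => ?_, fun i => ?_,
      fun r hr hr' i j hij => ?_, fun r hr hr' i hi => ?_⟩, ?_⟩ <;>
      simp only [Pi.inf_apply, sh]
    · have a1 := (h1 i).1 j hj hj'
      have a2 := (h1' i).1 j hj hj'
      omega
    · rw [(h1 i).2.1 s hs, (h1' i).2.1 s hs]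
    · rw [(h1 i).2.2 s hs, (h1' i).2.2 s hs]
    · rw [h2, h2']; omega
    · rw [h3, h3']; omega
    · have a1 := h4 r hr hr' i j hij
      have a2 := h4' r hr hr' i j hij
      omega
    · rcases le_total (a i (r - 1) + c) (b i (r - 1)) with h | h
      · rw [inf_eq_left.2 h]
        refine (h5 r hr hr' i hi).trans ?_
        exact EReal.coe_le_coe_iff.2 (by exact_mod_cast (by omega : a i (r - 1) ≤ a i (r - 1) + c))
      · rw [inf_eq_right.2 h]; exact h5' r hr hr' i hi
    · omega
  · rintro _ ⟨a, ⟨ha, hat⟩, rfl⟩ b ⟨hb, hbt⟩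
    obtain ⟨h1, h2, h3, h4, h5⟩ := mem_om.1 ha
    obtain ⟨h1', h2', h3', h4', h5'⟩ := mem_om.1 hb
    refine ⟨fun i s => max (a i s) (b i s - c), ?_, ?_⟩
    swap
    · ext i s
      simp only [Pi.sup_apply, sh]
      omega
    refine ⟨mem_om.2 ⟨fun i => ⟨fun j hj hj' => ?_, fun s hs => ?_, fun s hs => ?_⟩, fun i => ?_, fun i => ?_,
      fun r hr hr' i j hij => ?_, fun r hr hr' i hi => ?_⟩, ?_⟩ <;> try dsimp only
    · have a1 := (h1 i).1 j hj hj'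
      have a2 := (h1' i).1 j hj hj'
      omega
    · rw [(h1 i).2.1 s hs, (h1' i).2.1 s hs]
    · rw [(h1 i).2.2 s hs, (h1' i).2.2 s hs]
    · rw [h2, h2']; omega
    · rw [h3, h3']; omega
    · have a1 := h4 r hr hr' i j hij
      have a2 := h4' r hr hr' i j hij
      omega
    · refine (h5 r hr hr' i hi).trans ?_
      exact EReal.coe_le_coe_iff.2 (by exact_mod_cast (le_max_left (a i (r - 1)) _))
    · omega

/-- Monotonicity in boundary data combined with the independent-tubes lower bound. -/
lemma mono_tube {k n : ℕ} (hk : 0 < k) (x y : Fin k → ℤ) (g : ℤ → EReal)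
    (hx : ∀ i j : Fin k, i ≤ j → x j ≤ x i)
    (T0 T1 t z w d v : ℤ) (hT0 : 0 ≤ T0) (hT1 : T1 ≤ n) (ht0 : T0 ≤ t) (ht1 : t ≤ T1)
    (hd : 0 ≤ d) (lam : ℤ → ℝ) (D θ : ℝ) (hθ : 0 < θ)
    (hpos : ∀ c : ℤ, ∀ i : ℤ, 0 < (PP c T0 T1 (z - i * d) (w - i * d) (fun _ _ => True)).ncard)
    (hE : ∀ c : ℤ, ∀ i : ℤ, θ * ((PP c T0 T1 (z - i * d) (w - i * d) (fun _ _ => True)).ncard : ℝ)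
      ≤ ((PP c T0 T1 (z - i * d) (w - i * d) (fun r q => |(q : ℝ) - (lam r - i * d)| < D)).ncard : ℝ))
    (hlam : ∀ r, T0 < r → r ≤ T1 → lam r - lam (r - 1) + 2 * D ≤ d)
    (hv : (v : ℝ) ≤ lam t - ((k : ℝ) - 1) * d - D) :
    θ ^ k * ({Q ∈ Om n x y g | z ≤ Q ⟨k - 1, Nat.sub_lt hk Nat.one_pos⟩ T0 ∧
        w ≤ Q ⟨k - 1, Nat.sub_lt hk Nat.one_pos⟩ T1}.ncard : ℝ)
      ≤ ({Q ∈ Om n x y g | (z ≤ Q ⟨k - 1, Nat.sub_lt hk Nat.one_pos⟩ T0 ∧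
        w ≤ Q ⟨k - 1, Nat.sub_lt hk Nat.one_pos⟩ T1) ∧ v ≤ Q ⟨k - 1, Nat.sub_lt hk Nat.one_pos⟩ t}.ncard : ℝ) := by
  set e : Fin k := ⟨k - 1, Nat.sub_lt hk Nat.one_pos⟩ with he
  have hle : ∀ i : Fin k, i ≤ e := fun i => by
    rw [Fin.le_def]; have := i.2; simp only [he]; omega
  -- a low constant
  set c : ℤ := x e with hc
  have hxc : ∀ i, c ≤ x i := fun i => hx i e (hle i)
  set F : Fin k → Set (ℤ → ℤ) := fun i => PP c T0 T1 (z - (i : ℕ) * d) (w - (i : ℕ) * d) (fun _ _ => True) with hF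
  set E : Fin k → Set (ℤ → ℤ) := fun i => PP c T0 T1 (z - (i : ℕ) * d) (w - (i : ℕ) * d)
    (fun r q => |(q : ℝ) - (lam r - (i : ℕ) * d)| < D) with hEd
  set A : Set (Fin k → ℤ → ℤ) := {Q | (∀ i, Q i ∈ F i) ∧
    ∀ r, T0 < r → r ≤ T1 → ∀ i j : Fin k, (j : ℕ) = (i : ℕ) + 1 → Q j r ≤ Q i (r - 1)} with hA
  set U : Set (Fin k → ℤ → ℤ) := {Q ∈ A | v ≤ Q e t} with hU
  set B : Set (Fin k → ℤ → ℤ) := {Q ∈ Om n x y g | z ≤ Q e T0 ∧ w ≤ Q e T1} with hB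
  set C : Set (Fin k → ℤ → ℤ) := {Q ∈ Om n x y g | (z ≤ Q e T0 ∧ w ≤ Q e T1) ∧ v ≤ Q e t} with hC
  have hFfin : ∀ i, (F i).Finite := fun i => PP_finite ..
  have hEfin : ∀ i, (E i).Finite := fun i => PP_finite ..
  have hpifin : {Q : Fin k → ℤ → ℤ | ∀ i, Q i ∈ F i}.Finite := Set.Finite.pi' hFfin
  have hAsub : A ⊆ {Q : Fin k → ℤ → ℤ | ∀ i, Q i ∈ F i} := fun Q hQ => hQ.1
  have hAfin : A.Finite := hpifin.subset hAsub
  have hUfin : U.Finite := hAfin.subset (Set.sep_subset _ _)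
  have hBfin : B.Finite := (om_finite n x y g).subset (Set.sep_subset _ _)
  have hCfin : C.Finite := (om_finite n x y g).subset (Set.sep_subset _ _)
  have cardA : A.ncard ≤ ∏ i, (F i).ncard := by
    rw [← ncard_pi_le F hFfin]; exact Set.ncard_le_ncard hAsub hpifin
  have hEU : {Q : Fin k → ℤ → ℤ | ∀ i, Q i ∈ E i} ⊆ U := by
    intro Q hQ
    have hQ' : ∀ i, Q i ∈ E i := hQ
    refine ⟨⟨fun i => PP_mono _ _ _ _ _ (fun _ _ _ _ _ => trivial) (hQ' i), ?_⟩, ?_⟩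
    · intro r hr hr' i j hij
      have a1 := (hQ' i).2.2.2.2 (r - 1) (by omega) (by omega)
      have a2 := (hQ' j).2.2.2.2 r (by omega) (by omega)
      have a3 := hlam r hr hr'
      beta_reduce at a1 a2
      rw [abs_lt] at a1 a2
      have hj : ((j : ℕ) : ℝ) = (i : ℕ) + 1 := by exact_mod_cast hij
      have : (Q j r : ℝ) < Q i (r - 1) := by
        rw [hj] at a2
        nlinarith [a1.1, a2.2]
      exact_mod_cast this.le
    · have a1 := (hQ' e).2.2.2.2 t ht0 ht1
      beta_reduce at a1
      rw [abs_lt] at a1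
      have : ((e : ℕ) : ℝ) = (k : ℝ) - 1 := by
        rw [he]; push_cast [Nat.cast_sub hk]; simp
      rw [this] at a1
      have : (v : ℝ) < Q e t := by linarith [a1.1]
      exact_mod_cast this.le
  have cardU : ∏ i, (E i).ncard ≤ U.ncard := by
    rw [← ncard_pi_le E hEfin]; exact Set.ncard_le_ncard hEU hUfin
  have hEF : ∀ i, θ * ((F i).ncard : ℝ) ≤ (E i).ncard := fun i => by
    have := hE c ((i : ℕ) : ℤ)
    simpa [hF, hEd] using this
  have hFpos : ∀ i, 0 < ((F i).ncard : ℝ) := fun i => by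
    have := hpos c ((i : ℕ) : ℤ)
    exact_mod_cast this
  have key1 : θ ^ k * (A.ncard : ℝ) ≤ U.ncard := by
    calc θ ^ k * (A.ncard : ℝ) ≤ θ ^ k * ∏ i, ((F i).ncard : ℝ) := by
          gcongr; exact_mod_cast cardA
      _ = ∏ i, (θ * ((F i).ncard : ℝ)) := by
          rw [Finset.prod_mul_distrib]; simp
      _ ≤ ∏ i, ((E i).ncard : ℝ) :=
          Finset.prod_le_prod (fun i _ => by positivity) fun i _ => hEF i
      _ ≤ U.ncard := by exact_mod_cast cardU
  have Apos : 0 < (A.ncard : ℝ) := by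
    have h1 : (0 : ℝ) < ∏ i, ((E i).ncard : ℝ) :=
      Finset.prod_pos fun i _ => lt_of_lt_of_le (mul_pos hθ (hFpos i)) (hEF i)
    have h2 : (∏ i, ((E i).ncard : ℝ)) ≤ U.ncard := by exact_mod_cast cardU
    have h3 : (U.ncard : ℝ) ≤ A.ncard := by
      exact_mod_cast Set.ncard_le_ncard (Set.sep_subset _ _) hAfin
    linarith
  -- boundary comparison
  have hcmp : ∀ a ∈ A, ∀ b ∈ B, ∀ i s, (s ≤ T0 ∨ T1 ≤ s) → a i s ≤ b i s := by
    rintro a ⟨ha, -⟩ b ⟨hb, hb1, hb2⟩ i s hs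
    obtain ⟨h1, h2, h3, h4, h5⟩ := ha i
    have hid : 0 ≤ ((i : ℕ) : ℤ) * d := by positivity
    have hlow : ∀ s, c ≤ b i s := by
      intro s
      obtain ⟨g1, g2, g3, -⟩ := mem_om.1 hb
      rcases le_total s 0 with h | h
      · rw [(g1 i).2.1 s h, g2]; exact hxc i
      · calc c ≤ x i := hxc i
          _ = b i 0 := (g2 i).symm
          _ ≤ b i s := incr_mono (g1 i) h
    by_cases h : s < T0 ∨ T1 < s
    · rw [h4 s h]; exact hlow s
    · rcases hs with hs | hs
      · have : s = T0 := by omega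
        rw [this, h2]
        have := om_order hx hb hT0 (by omega) i e (hle i)
        omega
      · have : s = T1 := by omega
        rw [this, h3]
        have := om_order hx hb (by omega) hT1 i e (hle i)
        omega
  have key2 : U.ncard * B.ncard ≤ A.ncard * C.ncard := by
    refine ad_sets hUfin hBfin hAfin hCfin ?_ ?_
    · rintro a ⟨ha, hat⟩ b hb
      have hab := hcmp a ha b hb
      obtain ⟨g1, g2, g3, g4, g5⟩ := mem_om.1 hb.1
      refine ⟨fun i => ?_, ?_⟩
      · obtain ⟨h1, h2, h3, h4, h5⟩ := ha.1 i
        refine ⟨fun j hj hj' => ?_, ?_, ?_, fun s hs => ?_, fun _ _ _ => trivial⟩ <;>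
          simp only [Pi.inf_apply]
        · exact inf_le_inf (h1 j hj hj') ((g1 i).1 j (by omega) (by omega))
        · rw [inf_eq_left.2 (hab i T0 (Or.inl le_rfl)), h2]
        · rw [inf_eq_left.2 (hab i T1 (Or.inr le_rfl)), h3]
        · rw [inf_eq_left.2 (hab i s (by omega)), h4 s hs]
      · intro r hr hr' i j hij
        simp only [Pi.inf_apply]
        exact inf_le_inf (ha.2 r hr hr' i j hij) (g4 r (by omega) (by omega) i j hij)
    · rintro a ⟨ha, hat⟩ b hb
      have hab := hcmp a ha b hb
      obtain ⟨g1, g2, g3, g4, g5⟩ := mem_om.1 hb.1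
      refine ⟨mem_om.2 ⟨fun i => ⟨fun j hj hj' => ?_, fun s hs => ?_, fun s hs => ?_⟩, fun i => ?_, fun i => ?_,
        fun r hr hr' i j hij => ?_, fun r hr hr' i hi => ?_⟩, ⟨?_, ?_⟩, ?_⟩ <;>
        simp only [Pi.sup_apply]
      · by_cases h : T0 ≤ j ∧ j < T1
        · exact sup_le_sup ((ha.1 i).1 j h.1 h.2) ((g1 i).1 j hj hj')
        · rw [sup_eq_right.2 (hab i j (by omega)), sup_eq_right.2 (hab i (j + 1) (by omega))]
          exact (g1 i).1 j hj hj'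
      · rw [sup_eq_right.2 (hab i s (by omega)), sup_eq_right.2 (hab i 0 (by omega))]
        exact (g1 i).2.1 s hs
      · rw [sup_eq_right.2 (hab i s (by omega)), sup_eq_right.2 (hab i n (by omega))]
        exact (g1 i).2.2 s hs
      · rw [sup_eq_right.2 (hab i 0 (by omega))]; exact g2 i
      · rw [sup_eq_right.2 (hab i n (by omega))]; exact g3 i
      · by_cases h : T0 < r ∧ r ≤ T1
        · exact sup_le_sup (ha.2 r h.1 h.2 i j hij) (g4 r hr hr' i j hij)
        · rw [sup_eq_right.2 (hab i (r - 1) (by omega)), sup_eq_right.2 (hab j r (by omega))]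
          exact g4 r hr hr' i j hij
      · refine (g5 r hr hr' i hi).trans ?_
        exact EReal.coe_le_coe_iff.2 (by exact_mod_cast (le_max_right (a i (r - 1)) _))
      · exact hb.2.1.trans le_sup_right
      · exact hb.2.2.trans le_sup_right
      · exact le_trans hat le_sup_left
  have key2' : (U.ncard : ℝ) * B.ncard ≤ A.ncard * C.ncard := by exact_mod_cast key2
  have : (A.ncard : ℝ) * (θ ^ k * B.ncard) ≤ A.ncard * C.ncard := by
    calc (A.ncard : ℝ) * (θ ^ k * B.ncard) = (θ ^ k * A.ncard) * B.ncard := by ring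
      _ ≤ U.ncard * B.ncard := by gcongr
      _ ≤ _ := key2'
  exact le_of_mul_le_mul_left this Apos


/-! ### Straight tubes and tightness -/

lemma mc_pos (l m : ℕ) (hl : 0 < l) : 0 < Nat.multichoose l m := by
  rw [Nat.multichoose_eq]; exact Nat.choose_pos (by omega)

lemma PP_card' (c T0 T1 z w : ℤ) (hT : T0 ≤ T1) (hzw : z ≤ w) :
    (PP c T0 T1 z w (fun _ _ => True)).ncard = Nat.multichoose (T1 - T0).toNat (w - z).toNat := by
  have := PP_card c T1 w (T1 - T0).toNat (w - z).toNat
  rwa [Int.toNat_of_nonneg (by omega), Int.toNat_of_nonneg (by omega), sub_sub_cancel, sub_sub_cancel] at this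

lemma PP_tube' (c T0 T1 z w : ℤ) (hT : T0 ≤ T1) (hzw : z ≤ w) (q D : ℝ) (hD : 0 < D) :
    (D ^ 2 - ((w : ℝ) - z - q * (T1 - T0)) ^ 2 - sg q * (T1 - T0)) *
        ((PP c T0 T1 z w (fun _ _ => True)).ncard : ℝ)
      ≤ D ^ 2 * ((PP c T0 T1 z w (fun r v => |(w : ℝ) - v - q * (T1 - r)| < D)).ncard : ℝ) := by
  rw [PP_card' c T0 T1 z w hT hzw]
  have := PP_tube c T1 w q D hD (T1 - T0).toNat (w - z).toNat
  have e1 : (((T1 - T0).toNat : ℕ) : ℤ) = T1 - T0 := Int.toNat_of_nonneg (by omega)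
  have e2 : (((w - z).toNat : ℕ) : ℤ) = w - z := Int.toNat_of_nonneg (by omega)
  have e3 : (((T1 - T0).toNat : ℕ) : ℝ) = T1 - T0 := by exact_mod_cast e1
  have e4 : (((w - z).toNat : ℕ) : ℝ) = w - z := by exact_mod_cast e2
  rw [e1, e2, e3, e4, sub_sub_cancel, sub_sub_cancel] at this
  exact this

lemma straight_tube {k n : ℕ} (hk : 0 < k) (x y : Fin k → ℤ) (g : ℤ → EReal)
    (hx : ∀ i j : Fin k, i ≤ j → x j ≤ x i)
    (T0 T1 t z w d v : ℤ) (hT0 : 0 ≤ T0) (hT1 : T1 ≤ n) (hT : T0 < T1) (ht0 : T0 ≤ t) (ht1 : t ≤ T1)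
    (hzw : z ≤ w) (hd : 0 ≤ d) (q D θ : ℝ) (hD : 0 < D) (hθ : 0 < θ)
    (hθ2 : θ * D ^ 2 ≤ D ^ 2 - ((w : ℝ) - z - q * (T1 - T0)) ^ 2 - sg q * (T1 - T0))
    (hslope : q + 2 * D ≤ d)
    (hv : (v : ℝ) ≤ w - q * (T1 - t) - ((k : ℝ) - 1) * d - D) :
    θ ^ k * ({Q ∈ Om n x y g | z ≤ Q ⟨k - 1, Nat.sub_lt hk Nat.one_pos⟩ T0 ∧
        w ≤ Q ⟨k - 1, Nat.sub_lt hk Nat.one_pos⟩ T1}.ncard : ℝ)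
      ≤ ({Q ∈ Om n x y g | (z ≤ Q ⟨k - 1, Nat.sub_lt hk Nat.one_pos⟩ T0 ∧
        w ≤ Q ⟨k - 1, Nat.sub_lt hk Nat.one_pos⟩ T1) ∧ v ≤ Q ⟨k - 1, Nat.sub_lt hk Nat.one_pos⟩ t}.ncard : ℝ) := by
  refine mono_tube hk x y g hx T0 T1 t z w d v hT0 hT1 ht0 ht1 hd (fun r => w - q * (T1 - r)) D θ hθ
    ?_ ?_ ?_ ?_
  · intro c i
    rw [PP_card' _ _ _ _ _ hT.le (by omega)]
    exact mc_pos _ _ (by omega)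
  · intro c i
    have h1 := PP_tube' c T0 T1 (z - i * d) (w - i * d) hT.le (by omega) q D hD
    have h2 : PP c T0 T1 (z - i * d) (w - i * d) (fun r v => |((w - i * d : ℤ) : ℝ) - v - q * (T1 - r)| < D)
        ⊆ PP c T0 T1 (z - i * d) (w - i * d) (fun r v => |(v : ℝ) - (((w : ℝ) - q * (T1 - r)) - i * d)| < D) := by
      refine PP_mono _ _ _ _ _ fun r v _ _ h => ?_
      rw [abs_sub_comm]
      convert h using 2
      push_cast; ring
    have h3 : ((PP c T0 T1 (z - i * d) (w - i * d) (fun r v => |((w - i * d : ℤ) : ℝ) - v - q * (T1 - r)| < D)).ncard : ℝ)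
        ≤ ((PP c T0 T1 (z - i * d) (w - i * d) (fun r v => |(v : ℝ) - (((w : ℝ) - q * (T1 - r)) - i * d)| < D)).ncard : ℝ) := by
      exact_mod_cast Set.ncard_le_ncard h2 (PP_finite ..)
    have e : ((w - i * d : ℤ) : ℝ) - ((z - i * d : ℤ) : ℝ) = (w : ℝ) - z := by push_cast; ring
    rw [e] at h1
    set N := ((PP c T0 T1 (z - i * d) (w - i * d) (fun _ _ => True)).ncard : ℝ) with hN
    have hN0 : 0 ≤ N := by positivity
    have h4 := mul_le_mul_of_nonneg_right hθ2 hN0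
    have h5 : D ^ 2 * (θ * N) ≤ D ^ 2 * ((PP c T0 T1 (z - i * d) (w - i * d) (fun r v => |(v : ℝ) - (((w : ℝ) - q * (T1 - r)) - i * d)| < D)).ncard : ℝ) := by
      calc D ^ 2 * (θ * N) = θ * D ^ 2 * N := by ring
        _ ≤ _ := h4
        _ ≤ _ := h1
        _ ≤ _ := by gcongr
    exact le_of_mul_le_mul_left h5 (by positivity)
  · intro r _ _
    push_cast
    linarith
  · exact hv

lemma bern (k : ℕ) (hk : 0 < k) (η : ℝ) (h0 : 0 < η) (h1 : η < 1) : 1 - η ≤ (1 - η / k) ^ k := by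
  have hk' : (1 : ℝ) ≤ k := by exact_mod_cast hk
  have : η / k ≤ 1 := by rw [div_le_one (by linarith)]; linarith
  have h := one_add_mul_le_pow (a := -(η / k)) (by linarith) k
  have e : (k : ℝ) * (-(η / k)) = -η := by field_simp
  rw [e] at h
  calc 1 - η = 1 + -η := by ring
    _ ≤ _ := h
    _ = _ := by ring_nf

lemma sg_nonneg (q : ℝ) : 0 ≤ sg q := by unfold sg; nlinarith [sq_nonneg (q + 1)]

/-- Lower tightness of the lowest curve. -/
lemma tightness (p M η : ℝ) (hp : 0 < p) (hM : 0 < M) (hη : 0 < η) (hη1 : η < 1) (k : ℕ) (hk : 0 < k) :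
    ∃ R C0 : ℝ, 0 < R ∧ ∀ n : ℕ, C0 ≤ Real.sqrt n → ∀ x y : Fin k → ℤ,
      (∀ i j : Fin k, i ≤ j → x j ≤ x i) →
      (∀ i, |(x i : ℝ)| ≤ M * Real.sqrt n) → (∀ i, |(y i : ℝ) - p * n| ≤ M * Real.sqrt n) →
      ∀ g : ℤ → EReal, ∀ t : ℤ, 0 ≤ t → t ≤ n → ∀ v : ℤ, (v : ℝ) ≤ p * t - R * Real.sqrt n →
      (1 - η) * ((Om n x y g).ncard : ℝ)
        ≤ ({Q ∈ Om n x y g | v ≤ Q ⟨k - 1, Nat.sub_lt hk Nat.one_pos⟩ t}.ncard : ℝ) := by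
  have hk' : (1 : ℝ) ≤ k := by exact_mod_cast hk
  have hs := sg_nonneg p
  set B : ℝ := 1 + (1 + sg p) * k / η with hB
  have hB1 : 1 ≤ B := by
    have : 0 ≤ (1 + sg p) * k / η := by positivity
    linarith
  refine ⟨2 + M + k * (2 * B + p + 1) + B, 1 + 1 / p, by positivity, ?_⟩
  intro n hn x y hx hxM hyM g t ht0 ht1 v hv
  set S := Real.sqrt n with hS
  have hp' : 0 < 1 / p := by positivity
  have hS1 : 1 ≤ S := by linarith
  have hSn : (n : ℝ) = S ^ 2 := by rw [hS, Real.sq_sqrt (by positivity)]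
  have hpS : 1 ≤ p * S := by
    have : 1 / p ≤ S := by linarith
    rw [div_le_iff₀ hp] at this; linarith
  set e : Fin k := ⟨k - 1, Nat.sub_lt hk Nat.one_pos⟩ with he
  set z : ℤ := -⌈M * S⌉ with hz
  set w : ℤ := ⌊p * n - M * S⌋ with hw
  have z1 : (z : ℝ) ≤ -(M * S) := by rw [hz]; push_cast; linarith [Int.le_ceil (M * S)]
  have z2 : -(M * S) - 1 < (z : ℝ) := by rw [hz]; push_cast; linarith [Int.ceil_lt_add_one (M * S)]
  have w1 : (w : ℝ) ≤ p * n - M * S := Int.floor_le _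
  have w2 : p * n - M * S - 1 < (w : ℝ) := by linarith [Int.lt_floor_add_one (p * n - M * S)]
  have hn1 : (1 : ℝ) ≤ n := by rw [hSn]; nlinarith
  have hn1' : 0 < n := by exact_mod_cast (by linarith : (0 : ℝ) < n)
  set d : ℤ := ⌈2 * (B * S) + p⌉ with hd
  have d1 : 2 * (B * S) + p ≤ (d : ℝ) := Int.le_ceil _
  have d2 : (d : ℝ) < 2 * (B * S) + p + 1 := Int.ceil_lt_add_one _
  have hBS : 0 < B * S := by positivity
  have hdpos : (0 : ℝ) ≤ d := by linarith
  have hzw : z ≤ w := by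
    have : (z : ℝ) ≤ w := by nlinarith
    exact_mod_cast this
  have main := straight_tube hk x y g hx 0 n t z w d v le_rfl le_rfl (by exact_mod_cast hn1') ht0 ht1
    hzw (by exact_mod_cast hdpos) p (B * S) (1 - η / k) hBS ?_ ?_ (by linarith) ?_
  · have hsub1 : {Q ∈ Om n x y g | z ≤ Q e 0 ∧ w ≤ Q e n} = Om n x y g := by
      refine Set.sep_eq_self_iff_mem_true.2 ?_
      intro Q hQ
      obtain ⟨h1, h2, h3, -⟩ := mem_om.1 hQ
      rw [h2, h3]
      have a1 := abs_le.1 (hxM e)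
      have a2 := abs_le.1 (hyM e)
      constructor
      · have : (z : ℝ) ≤ x e := by linarith
        exact_mod_cast this
      · have : (w : ℝ) ≤ y e := by linarith
        exact_mod_cast this
    rw [hsub1] at main
    refine le_trans (mul_le_mul_of_nonneg_right (bern k hk η hη hη1) (by positivity)) (main.trans ?_)
    have hss : {Q ∈ Om n x y g | (z ≤ Q e 0 ∧ w ≤ Q e n) ∧ v ≤ Q e t} ⊆ {Q ∈ Om n x y g | v ≤ Q e t} :=
      fun Q hQ => ⟨hQ.1, hQ.2.2⟩
    exact_mod_cast Set.ncard_le_ncard hss ((om_finite n x y g).subset (Set.sep_subset _ _))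
  · have : η / k ≤ η := div_le_self hη.le hk'
    linarith
  · have hdev : ((w : ℝ) - z - p * ((n : ℤ) - (0 : ℤ))) ^ 2 ≤ 1 := by
      rw [sq_le_one_iff_abs_le_one, abs_le]
      push_cast
      constructor <;> linarith
    have h1 : (1 + sg p) ≤ η / k * B ^ 2 := by
      have : η / k * B = η / k + (1 + sg p) := by rw [hB]; field_simp
      have h0 : 0 < η / k := by positivity
      nlinarith
    have h2 : (1 + sg p) * S ^ 2 ≤ η / k * B ^ 2 * S ^ 2 := by gcongr
    have h3 : sg p * (((n : ℤ) : ℝ) - ((0 : ℤ) : ℝ)) = sg p * S ^ 2 := by push_cast; rw [hSn]; ring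
    rw [h3]
    have : 1 ≤ S ^ 2 := by nlinarith
    have e1 : (1 - η / k) * (B * S) ^ 2 = (B * S) ^ 2 - η / k * B ^ 2 * S ^ 2 := by ring
    rw [e1]
    generalize ((w : ℝ) - z - p * ((n : ℤ) - (0 : ℤ))) ^ 2 = dv at hdev ⊢
    linarith
  · have h1 : ((k : ℝ) - 1) * d ≤ k * ((2 * B + p + 1) * S) := by
      have : (d : ℝ) ≤ (2 * B + p + 1) * S := by nlinarith
      nlinarith
    push_cast
    nlinarith


/-! ### A single path has positive probability to stay in a bent tube -/

lemma pi_ratio (t s m a : ℕ) (κ : ℝ) (hκ : 0 ≤ κ) (H : ℕ)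
    (h : ∀ j < H, a + j + 1 ≤ m ∧ ((a : ℝ) + j + 1) * (s + (m - a - j) - 1) ≤
      (1 + κ) * ((t + (a + j)) * (m - a - j))) (hs : 0 < s) :
    ((t.multichoose a : ℝ) * (s.multichoose (m - a) : ℝ))
      ≤ (1 + κ) ^ H * ((t.multichoose (a + H) : ℝ) * (s.multichoose (m - (a + H)) : ℝ)) := by
  induction H with
  | zero => simp
  | succ H ih =>
    refine (ih fun j hj => h j (by omega)).trans ?_
    obtain ⟨h1, h2⟩ := h H (by omega)
    obtain ⟨b, hb⟩ : ∃ b, m = a + H + 1 + b := ⟨m - (a + H + 1), by omega⟩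
    have e1 : m - (a + H) = b + 1 := by omega
    have e2 : m - (a + (H + 1)) = b := by omega
    rw [e1, e2, pow_succ, mul_assoc]
    refine mul_le_mul_of_nonneg_left ?_ (by positivity)
    have r1 := mc_ratio t (a + H)
    have r2 := mc_ratio s b
    rw [show a + (H + 1) = a + H + 1 by ring]
    have hmb : (m : ℝ) - a - H = b + 1 := by rw [hb]; push_cast; ring
    rw [hmb] at h2
    push_cast at r1 r2
    set X := (t.multichoose (a + H) : ℝ) with hX
    set X' := (t.multichoose (a + H + 1) : ℝ) with hX'
    set Y := (s.multichoose b : ℝ) with hY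
    set Y' := (s.multichoose (b + 1) : ℝ) with hY'
    have hX0 : 0 ≤ X := by positivity
    have hY0 : 0 ≤ Y := by positivity
    have hP : (0 : ℝ) < ((a : ℝ) + H + 1) * (b + 1) := by positivity
    refine le_of_mul_le_mul_left ?_ hP
    calc ((a : ℝ) + H + 1) * (b + 1) * (X * Y') = ((a : ℝ) + H + 1) * X * ((b + 1) * Y') := by ring
      _ = ((a : ℝ) + H + 1) * X * ((s + b) * Y) := by rw [r2]
      _ = (((a : ℝ) + H + 1) * (s + (b + 1) - 1)) * (X * Y) := by ring
      _ ≤ ((1 + κ) * ((t + (a + H)) * (b + 1))) * (X * Y) := mul_le_mul_of_nonneg_right h2 (by positivity)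
      _ = (1 + κ) * (b + 1) * (((t + (a + H)) * X) * Y) := by ring
      _ = (1 + κ) * (b + 1) * (((a : ℝ) + H + 1) * X' * Y) := by rw [← r1]
      _ = _ := by ring

lemma sp_abstract (c T0 t T1 z w H : ℤ) (h0 : T0 ≤ t) (h1 : t ≤ T1) (φ ψ : ℤ → ℤ → Prop) (E : ℝ) (hE : 0 ≤ E)
    (hφ : ((PP c T0 T1 z w (fun _ _ => True)).ncard : ℝ) ≤ 2 * ((PP c T0 T1 z w φ).ncard : ℝ))
    (hψ : ∀ ζ, φ t ζ → z ≤ ζ → ζ ≤ w →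
      ((PP c T0 t z ζ (fun _ _ => True)).ncard : ℝ) * ((PP c t T1 ζ w (fun _ _ => True)).ncard : ℝ)
        ≤ E * (((PP c T0 t z (ζ + H) ψ).ncard : ℝ) * ((PP c t T1 (ζ + H) w ψ).ncard : ℝ))) :
    ((PP c T0 T1 z w (fun _ _ => True)).ncard : ℝ) ≤ 2 * (E * ((PP c T0 T1 z w ψ).ncard : ℝ)) := by
  have hmem : ∀ χ : ℤ → ℤ → Prop, ∀ Q ∈ PP c T0 T1 z w χ, z ≤ Q t ∧ Q t ≤ w ∧ χ t (Q t) := by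
    rintro χ Q ⟨a1, a2, a3, a4, a5⟩
    refine ⟨?_, ?_, a5 t h0 h1⟩
    · rw [← a2]; exact step_mono a1 le_rfl h0 h1
    · rw [← a3]; exact step_mono a1 h0 h1 le_rfl
  refine hφ.trans (mul_le_mul_of_nonneg_left ?_ (by norm_num))
  have f1 := ncard_fiber (PP c T0 T1 z w φ) (PP_finite ..) (fun Q => Q t) (Finset.Icc z w)
    (fun Q hQ => Finset.mem_Icc.2 ⟨(hmem φ Q hQ).1, (hmem φ Q hQ).2.1⟩)
  have f2 := ncard_fiber (PP c T0 T1 z w ψ) (PP_finite ..) (fun Q => Q t - H) (Finset.Icc (z - H) (w - H) ∪ Finset.Icc z w)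
    (fun Q hQ => Finset.mem_union_left _
      (Finset.mem_Icc.2 ⟨by have := (hmem ψ Q hQ).1; omega, by have := (hmem ψ Q hQ).2.1; omega⟩))
  rw [f1, f2]
  push_cast
  rw [Finset.mul_sum]
  refine (Finset.sum_le_sum (g := fun ζ => E * ({a ∈ PP c T0 T1 z w ψ | a t - H = ζ}.ncard : ℝ)) fun ζ hζ => ?_).trans
    (Finset.sum_le_sum_of_subset_of_nonneg Finset.subset_union_right fun _ _ _ => by positivity)
  have e : {a ∈ PP c T0 T1 z w ψ | a t - H = ζ} = {a ∈ PP c T0 T1 z w ψ | a t = ζ + H} := by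
    ext Q; simp only [Set.mem_ofPred_eq, sub_eq_iff_eq_add]
  rw [e, PP_concat _ _ _ _ _ _ _ _ h0 h1, PP_concat _ _ _ _ _ _ _ _ h0 h1]
  push_cast
  by_cases hz : φ t ζ
  · obtain ⟨b1, b2⟩ := Finset.mem_Icc.1 hζ
    refine le_trans ?_ (hψ ζ hz b1 b2)
    refine mul_le_mul ?_ ?_ (by positivity) (by positivity)
    · exact_mod_cast Set.ncard_le_ncard (PP_mono _ _ _ _ _ fun _ _ _ _ _ => trivial) (PP_finite ..)
    · exact_mod_cast Set.ncard_le_ncard (PP_mono _ _ _ _ _ fun _ _ _ _ _ => trivial) (PP_finite ..)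
  · have : (PP c t T1 ζ w φ).ncard = 0 := by
      rw [Set.ncard_eq_zero (PP_finite ..)]
      refine Set.eq_empty_of_forall_notMem ?_
      rintro Q ⟨a1, a2, a3, a4, a5⟩
      exact hz (a2 ▸ a5 t le_rfl h1)
    rw [this]
    simp only [Nat.cast_zero, mul_zero]
    positivity


lemma half_tube (c T0 T1 z w : ℤ) (hT : T0 ≤ T1) (hzw : z ≤ w) (q D : ℝ) (hD : 0 < D) (ψ : ℤ → ℤ → Prop)
    (h : 2 * (((w : ℝ) - z - q * (T1 - T0)) ^ 2 + sg q * (T1 - T0)) ≤ D ^ 2)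
    (hψ : ∀ r v : ℤ, T0 ≤ r → r ≤ T1 → |(w : ℝ) - v - q * (T1 - r)| < D → ψ r v) :
    ((PP c T0 T1 z w (fun _ _ => True)).ncard : ℝ) ≤ 2 * ((PP c T0 T1 z w ψ).ncard : ℝ) := by
  have h1 := PP_tube' c T0 T1 z w hT hzw q D hD
  have h3 : ((PP c T0 T1 z w (fun r v => |(w : ℝ) - v - q * (T1 - r)| < D)).ncard : ℝ)
      ≤ ((PP c T0 T1 z w ψ).ncard : ℝ) := by
    exact_mod_cast Set.ncard_le_ncard (PP_mono _ _ _ _ _ hψ) (PP_finite ..)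
  set N := ((PP c T0 T1 z w (fun _ _ => True)).ncard : ℝ) with hN
  have hN0 : 0 ≤ N := by positivity
  have h4 : D ^ 2 / 2 * N ≤ D ^ 2 * ((PP c T0 T1 z w ψ).ncard : ℝ) := by
    refine le_trans (mul_le_mul_of_nonneg_right ?_ hN0) (h1.trans (mul_le_mul_of_nonneg_left h3 (by positivity)))
    linarith
  have hD2 : 0 < D ^ 2 := by positivity
  refine le_of_mul_le_mul_left ?_ hD2
  linarith

lemma sg_mono {a b : ℝ} (ha : 0 ≤ a) (hab : a ≤ b) : sg a ≤ sg b := by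
  unfold sg; nlinarith

lemma half_aux (p B S : ℝ) (hp : 0 < p) (hB0 : 2 ≤ B) (hS1 : 1 ≤ S) (u : ℝ) (hu : |u| ≤ B * S + 2) (q : ℝ)
    (hq0 : 0 ≤ q) (hq1 : q ≤ p + 1) (l : ℝ) (hl0 : 0 ≤ l) (hl : l ≤ S ^ 2) :
    2 * (u ^ 2 + sg q * l) ≤ ((2 * (B + 2) + 2 * sg (p + 1)) * S) ^ 2 := by
  have hs1 : 1 ≤ sg (p + 1) := by unfold sg; nlinarith
  have u1 : u ^ 2 ≤ ((B + 2) * S) ^ 2 := by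
    rw [← sq_abs]
    gcongr
    linarith
  have u2 : sg q * l ≤ sg (p + 1) * S ^ 2 :=
    mul_le_mul (sg_mono hq0 hq1) hl hl0 (by linarith)
  have u3 : 2 * ((B + 2) ^ 2 + sg (p + 1)) ≤ (2 * (B + 2) + 2 * sg (p + 1)) ^ 2 := by nlinarith
  have u4 : 2 * ((B + 2) ^ 2 + sg (p + 1)) * S ^ 2 ≤ (2 * (B + 2) + 2 * sg (p + 1)) ^ 2 * S ^ 2 := by gcongr
  rw [mul_pow] at *
  generalize (2 * (B + 2) + 2 * sg (p + 1)) ^ 2 * S ^ 2 = A at *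
  linarith

lemma ratio_aux (p δ K S n t α b : ℝ) (hp : 0 < p) (hδ : 0 < δ) (hK : 0 < K) (hS1 : 1 ≤ S) (hSn : n = S ^ 2)
    (htpos : 0 < t) (ht1 : δ * n ≤ t) (htn : t ≤ n) (hα0 : 0 ≤ α) (hα1 : α ≤ p * t + K * S)
    (hb1 : p * (n - t) - 1 - K * S ≤ b) (hb2 : b ≤ p * n + 1) (hb3 : p * δ * S ^ 2 / 2 ≤ b) :
    (α + 1) * (n - t + b - 1) ≤ (1 + 2 * (K + p + 3) / (p * δ ^ 2) / S) * ((t + α) * b) := by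
  have hS23 : S ^ 2 ≤ S ^ 3 := pow_le_pow_right₀ hS1 (by norm_num)
  have g1 : α * (n - t) - t * b ≤ (K + 1) * S ^ 3 := by
    have u1 : α * (n - t) ≤ (p * t + K * S) * (n - t) := mul_le_mul_of_nonneg_right hα1 (by linarith)
    have u2 : t * (p * (n - t) - 1 - K * S) ≤ t * b := mul_le_mul_of_nonneg_left hb1 htpos.le
    have u3 : t ≤ S ^ 3 := by
      have : t ≤ S ^ 2 := by rw [← hSn]; linarith
      linarith
    have u4 : (p * t + K * S) * (n - t) - t * (p * (n - t) - 1 - K * S) = K * S * n + t := by ring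
    have u5 : K * S * n = K * S ^ 3 := by rw [hSn]; ring
    linarith
  have g2 : -α + (n - t) + b - 1 ≤ (p + 2) * S ^ 3 := by
    have u1 : -α + (n - t) + b - 1 ≤ n + p * n := by linarith
    have u2 : (1 + p) * n ≤ (1 + p) * S ^ 3 := by rw [hSn]; gcongr
    have u3 : 0 < S ^ 3 := by positivity
    linarith
  have g3 : (K + p + 3) * S ^ 3 ≤ 2 * (K + p + 3) / (p * δ ^ 2) / S * ((t + α) * b) := by
    have u1 : δ * S ^ 2 * (p * δ * S ^ 2 / 2) ≤ (t + α) * b := by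
      apply mul_le_mul _ hb3 (by positivity) (by linarith)
      rw [← hSn]; linarith
    calc (K + p + 3) * S ^ 3 = 2 * (K + p + 3) / (p * δ ^ 2) / S * (δ * S ^ 2 * (p * δ * S ^ 2 / 2)) := by
          field_simp
      _ ≤ _ := by gcongr
  linarith

set_option maxHeartbeats 4000000 in
lemma single_path (p δ : ℝ) (hp : 0 < p) (hδ : 0 < δ) :
    ∃ B3 : ℝ, 0 < B3 ∧ ∀ h : ℝ, 0 < h → ∃ C0 θ : ℝ, 0 < θ ∧ ∀ n : ℕ, C0 ≤ Real.sqrt n →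
      1 ≤ Real.sqrt n ∧ ∀ t : ℤ, δ * n ≤ t → (t : ℝ) ≤ n - δ * n →
      (⌈h * Real.sqrt n⌉ / (t : ℝ) ≤ 1 ∧ ⌈h * Real.sqrt n⌉ / ((n : ℝ) - t) ≤ p) ∧
      ∀ c z w : ℤ, |(w : ℝ) - z - p * n| ≤ 1 → z ≤ w ∧
        θ * ((PP c 0 n z w (fun _ _ => True)).ncard : ℝ)
          ≤ ((PP c 0 n z w (fun r q => |(q : ℝ) - (if r ≤ t then z + (p + ⌈h * Real.sqrt n⌉ / (t : ℝ)) * r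
              else w - (p - ⌈h * Real.sqrt n⌉ / ((n : ℝ) - t)) * (n - r))| < B3 * Real.sqrt n)).ncard : ℝ) := by
  have hs := sg_nonneg p
  have hs1 : 1 ≤ sg (p + 1) := by unfold sg; nlinarith
  set B : ℝ := 2 * (sg p + 1) with hB
  set B2 : ℝ := 2 * (B + 2) + 2 * sg (p + 1) with hB2
  have hB0 : 2 ≤ B := by linarith
  refine ⟨B2 + B + 3, by positivity, fun h hh => ?_⟩
  set K : ℝ := B + h + 2 with hK
  set C : ℝ := 2 * (K + p + 3) / (p * δ ^ 2) with hC
  have hC0 : 0 < C := by positivity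
  refine ⟨1 + 1 / p + (h + 1) / δ + (h + 1) / (p * δ) + 2 * (K + 1) / (p * δ), 1 / (8 * Real.exp (C * (h + 1))), by positivity, ?_⟩
  intro n hn
  set S := Real.sqrt n with hS
  have q1 : 0 < 1 / p := by positivity
  have q2 : 0 < (h + 1) / δ := by positivity
  have q3 : 0 < (h + 1) / (p * δ) := by positivity
  have q4 : 0 < 2 * (K + 1) / (p * δ) := by positivity
  have hS1 : 1 ≤ S := by linarith
  have hSn : (n : ℝ) = S ^ 2 := by rw [hS, Real.sq_sqrt (by positivity)]
  have l1 : 1 ≤ p * S := by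
    have : 1 / p ≤ S := by linarith
    rw [div_le_iff₀ hp] at this; linarith
  have l2 : h + 1 ≤ δ * S := by
    have : (h + 1) / δ ≤ S := by linarith
    rw [div_le_iff₀ hδ] at this; linarith
  have l3 : h + 1 ≤ p * δ * S := by
    have : (h + 1) / (p * δ) ≤ S := by linarith
    rw [div_le_iff₀ (by positivity)] at this; linarith
  have l4 : 2 * (K + 1) ≤ p * δ * S := by
    have : 2 * (K + 1) / (p * δ) ≤ S := by linarith
    rw [div_le_iff₀ (by positivity)] at this; linarith
  have hS0 : 0 ≤ S := by linarith
  refine ⟨hS1, ?_⟩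
  intro t ht1 ht2
  have hn1 : (1 : ℝ) ≤ n := by rw [hSn]; nlinarith
  have hδn : 0 < δ * n := by positivity
  have htpos : (0 : ℝ) < t := by linarith
  have hspos : (0 : ℝ) < n - t := by linarith
  set H : ℤ := ⌈h * S⌉ with hH
  have H1 : h * S ≤ (H : ℝ) := Int.le_ceil _
  have H2 : (H : ℝ) ≤ (h + 1) * S := by have := (Int.ceil_lt_add_one (h * S)); rw [← hH] at this; linarith
  have H0 : (0 : ℝ) ≤ H := le_trans (by positivity) H1
  have hr1 : (H : ℝ) / t ≤ 1 := by
    rw [div_le_one htpos]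
    have : (h + 1) * S ≤ δ * n := by rw [hSn]; linarith [mul_le_mul_of_nonneg_right l2 hS0]
    linarith
  have hr2 : (H : ℝ) / (n - t) ≤ p := by
    rw [div_le_iff₀ hspos]
    have : (h + 1) * S ≤ p * (δ * n) := by rw [hSn]; linarith [mul_le_mul_of_nonneg_right l3 hS0]
    have h' : p * (δ * n) ≤ p * (n - t) := mul_le_mul_of_nonneg_left (by linarith) hp.le
    linarith
  have hr1' : 0 ≤ (H : ℝ) / t := by positivity
  have hr2' : 0 ≤ (H : ℝ) / (n - t) := by positivity
  refine ⟨⟨hr1, hr2⟩, ?_⟩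
  intro c z w hzw
  have m1 := abs_le.1 hzw
  have hzw' : z ≤ w := by
    have : (z : ℝ) ≤ w := by
      have : 1 ≤ p * n := by rw [hSn]; linarith [mul_le_mul_of_nonneg_right l1 hS0]
      linarith
    exact_mod_cast this
  refine ⟨hzw', ?_⟩
  set p1 : ℝ := p + H / t with hp1
  set p2 : ℝ := p - H / (n - t) with hp2
  have hp1t : p1 * t = p * t + H := by rw [hp1]; field_simp
  have hp2t : p2 * (n - t) = p * (n - t) - H := by rw [hp2]; field_simp
  set ψ : ℤ → ℤ → Prop := fun r q => |(q : ℝ) - (if r ≤ t then z + p1 * r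
              else w - p2 * (n - r))| < (B2 + B + 3) * S with hψ
  have ht0' : (0 : ℤ) ≤ t := by exact_mod_cast htpos.le
  have htn' : t ≤ n := by
    have : (t : ℝ) ≤ n := by linarith
    exact_mod_cast this
  have main := sp_abstract c 0 t n z w H ht0' htn'
    (fun r v => |(w : ℝ) - v - p * (n - r)| < B * S) ψ (4 * Real.exp (C * (h + 1))) (by positivity) ?_ ?_
  · rw [div_mul_eq_mul_div, one_mul, div_le_iff₀ (by positivity)]
    linarith
  · refine half_tube c 0 n z w (by positivity) hzw' p (B * S) (by positivity) _ ?_ ?_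
    · have hdev : ((w : ℝ) - z - p * ((n : ℤ) - (0 : ℤ))) ^ 2 ≤ 1 := by
        rw [sq_le_one_iff_abs_le_one]
        simpa using hzw
      generalize ((w : ℝ) - z - p * ((n : ℤ) - (0 : ℤ))) ^ 2 = dv at hdev ⊢
      push_cast
      rw [hSn, sub_zero, mul_pow]
      have : 2 * (1 + sg p) ≤ B ^ 2 := by rw [hB]; nlinarith
      have h2 := mul_le_mul_of_nonneg_right this (sq_nonneg S)
      have h3 : 1 ≤ S ^ 2 := hSn ▸ hn1
      linarith
    · intro r v _ _ hr
      simpa using hr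
  · intro ζ hζ hζ1 hζ2
    have a1 := abs_lt.1 hζ
    -- basic bounds
    have b1 : |(ζ : ℝ) - z - p * t| ≤ B * S + 1 := by rw [abs_le]; constructor <;> linarith
    have b2 := abs_le.1 b1
    have hKS : B * S + 1 + (h + 1) * S ≤ K * S := by rw [hK]; linarith
    have hbig : p * δ * S ^ 2 / 2 ≤ p * (n - t) - 1 - K * S := by
      have : p * δ * S ^ 2 ≤ p * (n - t) := by rw [mul_assoc]; gcongr; rw [← hSn]; linarith
      linarith [mul_le_mul_of_nonneg_right l4 hS0]
    have hbpos : 0 < p * δ * S ^ 2 / 2 := by positivity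
    have hζH : ζ + H ≤ w := by
      have : (ζ : ℝ) + H ≤ w := by linarith
      exact_mod_cast this
    have hHz : 0 ≤ H := by exact_mod_cast H0
    -- ratio
    have R : ((PP c 0 t z ζ (fun _ _ => True)).ncard : ℝ) * ((PP c t n ζ w (fun _ _ => True)).ncard : ℝ)
        ≤ Real.exp (C * (h + 1)) * (((PP c 0 t z (ζ + H) (fun _ _ => True)).ncard : ℝ)
          * ((PP c t n (ζ + H) w (fun _ _ => True)).ncard : ℝ)) := by
      rw [PP_card' _ _ _ _ _ ht0' hζ1, PP_card' _ _ _ _ _ htn' hζ2, PP_card' _ _ _ _ _ ht0' (by omega),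
        PP_card' _ _ _ _ _ htn' hζH]
      have := pi_ratio (t - 0).toNat (n - t).toNat (w - z).toNat (ζ - z).toNat (C / S) (by positivity) H.toNat ?_ ?_
      · have e1 : (w - z).toNat - (ζ - z).toNat = (w - ζ).toNat := by omega
        have e2 : (ζ - z).toNat + H.toNat = (ζ + H - z).toNat := by omega
        have e3 : (w - z).toNat - (ζ + H - z).toNat = (w - (ζ + H)).toNat := by omega
        rw [e2, e1, e3] at this
        refine this.trans (mul_le_mul_of_nonneg_right ?_ (by positivity))
        have e4 : ((H.toNat : ℕ) : ℝ) = H := by exact_mod_cast Int.toNat_of_nonneg hHz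
        calc (1 + C / S) ^ H.toNat ≤ (Real.exp (C / S)) ^ H.toNat := by
              gcongr
              linarith [Real.add_one_le_exp (C / S)]
          _ = Real.exp (H * (C / S)) := by rw [← Real.exp_nat_mul, e4]
          _ ≤ _ := by
            apply Real.exp_le_exp.2
            rw [mul_div_assoc', div_le_iff₀ (by linarith)]
            linarith [mul_le_mul_of_nonneg_left H2 hC0.le]
      · intro j hj
        have c1 : (((t - 0).toNat : ℕ) : ℝ) = t := by
          rw [sub_zero]; exact_mod_cast Int.toNat_of_nonneg ht0'
        have c2 : (((n - t).toNat : ℕ) : ℝ) = n - t := by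
          exact_mod_cast Int.toNat_of_nonneg (by omega : (0 : ℤ) ≤ n - t)
        have c3 : (((w - z).toNat : ℕ) : ℝ) = w - z := by
          exact_mod_cast Int.toNat_of_nonneg (by omega : (0 : ℤ) ≤ w - z)
        have c4 : (((ζ - z).toNat : ℕ) : ℝ) = ζ - z := by
          exact_mod_cast Int.toNat_of_nonneg (by omega : (0 : ℤ) ≤ ζ - z)
        refine ⟨by omega, ?_⟩
        rw [c1, c2, c3, c4]
        have hjH : (j : ℝ) ≤ H := by
          have : (j : ℤ) ≤ H := by omega
          exact_mod_cast this
        have hj0 : (0 : ℝ) ≤ j := by positivity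
        obtain ⟨α, hα⟩ : ∃ α : ℝ, α = ζ - z + j := ⟨_, rfl⟩
        obtain ⟨b, hb⟩ : ∃ b : ℝ, b = w - z - α := ⟨_, rfl⟩
        have hα0 : 0 ≤ α := by
          have : (z : ℝ) ≤ ζ := by exact_mod_cast hζ1
          linarith
        have hα1 : α ≤ p * t + K * S := by linarith
        have hb1 : p * (n - t) - 1 - K * S ≤ b := by linarith
        have hb2 : b ≤ p * n + 1 := by linarith
        have hb3 : p * δ * S ^ 2 / 2 ≤ b := by linarith
        rw [show (ζ : ℝ) - z + j + 1 = α + 1 by rw [hα], show (w : ℝ) - z - (ζ - z) - j = b by rw [hb, hα]; ring,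
          ← hα]
        exact ratio_aux p δ K S n t α b hp hδ (by positivity) hS1 hSn htpos (by linarith) (by linarith) hα0 hα1 hb1 hb2 hb3
      · have : t < n := by
          have : (t : ℝ) < n := by linarith
          exact_mod_cast this
        omega
    have hE : (B2 + B + 3) * S = B2 * S + B * S + 3 * S := by ring
    have hhalf : ∀ u : ℝ, |u| ≤ B * S + 2 → ∀ q, 0 ≤ q → q ≤ p + 1 → ∀ l : ℝ, 0 ≤ l → l ≤ n →
        2 * (u ^ 2 + sg q * l) ≤ (B2 * S) ^ 2 := by
      rw [hB2]
      intro u hu q hq0 hq1 l hl0 hl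
      exact half_aux p B S hp hB0 hS1 u hu q hq0 hq1 l hl0 (hSn ▸ hl)
    have T1 : ((PP c 0 t z (ζ + H) (fun _ _ => True)).ncard : ℝ) ≤ 2 * ((PP c 0 t z (ζ + H) ψ).ncard : ℝ) := by
      refine half_tube c 0 t z (ζ + H) ht0' (by omega) p1 (B2 * S) (by positivity) _ ?_ ?_
      · refine hhalf _ ?_ p1 (by positivity) (by linarith) _ (by push_cast; linarith) (by push_cast; linarith)
        push_cast
        rw [sub_zero, hp1t, abs_le]
        constructor <;> linarith
      · intro r v hr0 hr1 hr
        rw [hψ]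
        beta_reduce
        rw [hE]
        rw [if_pos hr1]
        push_cast at hr
        have := abs_lt.1 hr
        rw [abs_lt]
        have e : (ζ : ℝ) + H - v - p1 * (t - r) = (z + p1 * r - v) + (ζ - z - p * t) := by linarith
        rw [e] at this
        constructor <;> linarith
    have T2 : ((PP c t n (ζ + H) w (fun _ _ => True)).ncard : ℝ) ≤ 2 * ((PP c t n (ζ + H) w ψ).ncard : ℝ) := by
      refine half_tube c t n (ζ + H) w htn' hζH p2 (B2 * S) (by positivity) _ ?_ ?_
      · refine hhalf _ ?_ p2 (by linarith) (by linarith) _ (by push_cast; linarith) (by push_cast; linarith)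
        push_cast
        rw [hp2t, abs_le]
        constructor <;> linarith
      · intro r v hr0 hr1 hr
        rw [hψ]
        beta_reduce
        rw [hE]
        push_cast at hr
        have := abs_lt.1 hr
        rw [abs_lt]
        split_ifs with hrt
        · have hrt' : r = t := by omega
          subst hrt'
          constructor <;> linarith
        · have hBS : 0 < B * S := by positivity
          constructor <;> linarith
    calc _ ≤ _ := R
      _ ≤ Real.exp (C * (h + 1)) * ((2 * ((PP c 0 t z (ζ + H) ψ).ncard : ℝ)) * (2 * ((PP c t n (ζ + H) w ψ).ncard : ℝ))) := by
        gcongr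
      _ = _ := by ring


/-- The lowest curve is high at time `t` with probability bounded below. -/
lemma raise (p M δ K : ℝ) (hp : 0 < p) (hM : 0 < M) (hδ : 0 < δ) (hK : 0 < K) (k : ℕ) (hk : 0 < k) :
    ∃ ε C0 : ℝ, 0 < ε ∧ ∀ n : ℕ, C0 ≤ Real.sqrt n → ∀ x y : Fin k → ℤ,
      (∀ i j : Fin k, i ≤ j → x j ≤ x i) →
      (∀ i, |(x i : ℝ)| ≤ M * Real.sqrt n) → (∀ i, |(y i : ℝ) - p * n| ≤ M * Real.sqrt n) →
      ∀ g : ℤ → EReal, ∀ t : ℤ, δ * n ≤ t → (t : ℝ) ≤ n - δ * n → ∀ v : ℤ, (v : ℝ) ≤ p * t + K * Real.sqrt n →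
      ε * ((Om n x y g).ncard : ℝ)
        ≤ ({Q ∈ Om n x y g | v ≤ Q ⟨k - 1, Nat.sub_lt hk Nat.one_pos⟩ t}.ncard : ℝ) := by
  have hk' : (1 : ℝ) ≤ k := by exact_mod_cast hk
  obtain ⟨B, hB, HB⟩ := single_path p δ hp hδ
  obtain ⟨C0, θ, hθ, HC⟩ := HB (K + M + 1 + k * (2 * B + p + 2) + B) (by positivity)
  refine ⟨θ ^ k, C0, by positivity, ?_⟩
  intro n hn x y hx hxM hyM g t ht1 ht2 v hv
  obtain ⟨hS1, HS⟩ := HC n hn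
  obtain ⟨⟨hr1, hr2⟩, HP⟩ := HS t ht1 ht2
  clear HB HC HS
  set S := Real.sqrt n with hS
  set h : ℝ := K + M + 1 + k * (2 * B + p + 2) + B with hh
  set H : ℤ := ⌈h * S⌉ with hH
  have H1 : h * S ≤ (H : ℝ) := Int.le_ceil _
  have hS0 : 0 ≤ S := by linarith
  have hSn : (n : ℝ) = S ^ 2 := by rw [hS, Real.sq_sqrt (by positivity)]
  have hn1 : (1 : ℝ) ≤ n := by rw [hSn]; exact one_le_pow₀ hS1
  have hδn : 0 < δ * n := by positivity
  have htpos : (0 : ℝ) < t := by linarith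
  have hspos : (0 : ℝ) < n - t := by linarith
  have ht0' : (0 : ℤ) ≤ t := by exact_mod_cast htpos.le
  have htn' : t ≤ n := by
    have : (t : ℝ) ≤ n := by linarith
    exact_mod_cast this
  have H0 : (0 : ℝ) ≤ H := le_trans (by positivity) H1
  have hr1' : 0 ≤ (H : ℝ) / t := by positivity
  have hr2' : 0 ≤ (H : ℝ) / (n - t) := by positivity
  set e : Fin k := ⟨k - 1, Nat.sub_lt hk Nat.one_pos⟩ with he
  set z : ℤ := -⌈M * S⌉ with hz
  set w : ℤ := ⌊p * n - M * S⌋ with hw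
  have z1 : (z : ℝ) ≤ -(M * S) := by rw [hz]; push_cast; linarith [Int.le_ceil (M * S)]
  have z2 : -(M * S) - 1 < (z : ℝ) := by rw [hz]; push_cast; linarith [Int.ceil_lt_add_one (M * S)]
  have w1 : (w : ℝ) ≤ p * n - M * S := Int.floor_le _
  have w2 : p * n - M * S - 1 < (w : ℝ) := by linarith [Int.lt_floor_add_one (p * n - M * S)]
  set d : ℤ := ⌈2 * (B * S) + p + 1⌉ with hd
  have d1 : 2 * (B * S) + p + 1 ≤ (d : ℝ) := Int.le_ceil _
  have d2 : (d : ℝ) < 2 * (B * S) + p + 2 := by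
    have := Int.ceil_lt_add_one (2 * (B * S) + p + 1)
    rw [← hd] at this; linarith
  have hBS : 0 < B * S := by positivity
  have hdpos : (0 : ℝ) ≤ d := by linarith
  have hdev : |(w : ℝ) - z - p * n| ≤ 1 := by rw [abs_le]; constructor <;> linarith
  have hdevi : ∀ i : ℤ, |((w - i * d : ℤ) : ℝ) - ((z - i * d : ℤ) : ℝ) - p * n| ≤ 1 := by
    intro i
    have : ((w - i * d : ℤ) : ℝ) - ((z - i * d : ℤ) : ℝ) - p * n = (w : ℝ) - z - p * n := by push_cast; ring
    rwa [this]
  set p1 : ℝ := p + H / t with hp1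
  set p2 : ℝ := p - H / (n - t) with hp2
  have hp1t : p1 * t = p * t + H := by rw [hp1]; field_simp
  have hp2t : p2 * (n - t) = p * (n - t) - H := by rw [hp2]; field_simp
  have main := mono_tube hk x y g hx 0 n t z w d v le_rfl le_rfl ht0' htn' (by exact_mod_cast hdpos)
    (fun r => if r ≤ t then z + p1 * r else w - p2 * (n - r)) (B * S) θ hθ ?_ ?_ ?_ ?_
  · have hsub1 : {Q ∈ Om n x y g | z ≤ Q e 0 ∧ w ≤ Q e n} = Om n x y g := by
      refine Set.sep_eq_self_iff_mem_true.2 ?_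
      intro Q hQ
      obtain ⟨h1, h2, h3, -⟩ := mem_om.1 hQ
      rw [h2, h3]
      have a1 := abs_le.1 (hxM e)
      have a2 := abs_le.1 (hyM e)
      constructor
      · have : (z : ℝ) ≤ x e := by linarith
        exact_mod_cast this
      · have : (w : ℝ) ≤ y e := by linarith
        exact_mod_cast this
    rw [hsub1] at main
    refine main.trans ?_
    have hss : {Q ∈ Om n x y g | (z ≤ Q e 0 ∧ w ≤ Q e n) ∧ v ≤ Q e t} ⊆ {Q ∈ Om n x y g | v ≤ Q e t} :=
      fun Q hQ => ⟨hQ.1, hQ.2.2⟩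
    exact_mod_cast Set.ncard_le_ncard hss ((om_finite n x y g).subset (Set.sep_subset _ _))
  · intro c i
    rw [PP_card' _ _ _ _ _ (by positivity) (HP c _ _ (hdevi i)).1]
    refine mc_pos _ _ ?_
    have : 0 < n := by exact_mod_cast (by linarith : (0 : ℝ) < n)
    omega
  · intro c i
    refine (HP c _ _ (hdevi i)).2.trans ?_
    have hss := PP_mono c 0 n (z - i * d) (w - i * d)
      (φ := fun r q => |(q : ℝ) - (if r ≤ t then ((z - i * d : ℤ) : ℝ) + p1 * r
              else ((w - i * d : ℤ) : ℝ) - p2 * (n - r))| < B * S)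
      (ψ := fun r q => |(q : ℝ) - ((if r ≤ t then (z : ℝ) + p1 * r else w - p2 * (n - r)) - i * d)| < B * S) (by
        intro r q _ _ h
        beta_reduce at h ⊢
        convert h using 3
        split_ifs <;> push_cast <;> ring)
    exact_mod_cast Set.ncard_le_ncard hss (PP_finite ..)
  · intro r hr0 hrn
    beta_reduce
    rcases lt_trichotomy r (t + 1) with hr | hr | hr
    · rw [if_pos (by omega), if_pos (by omega)]
      push_cast
      linarith
    · rw [if_neg (by omega), if_pos (by omega), hr]
      push_cast
      have := (abs_le.1 hdev).2
      linarith
    · rw [if_neg (by omega), if_neg (by omega)]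
      push_cast
      linarith
  · beta_reduce
    rw [if_pos le_rfl, hp1t]
    have h1 : ((k : ℝ) - 1) * d ≤ k * ((2 * B + p + 2) * S) := by
      have h2 : (d : ℝ) ≤ (2 * B + p + 2) * S := by
        have : p + 2 ≤ (p + 2) * S := le_mul_of_one_le_right (by linarith) hS1
        linarith
      exact mul_le_mul (by linarith) h2 hdpos (by linarith)
    rw [hh] at H1
    linarith


lemma osc_step {k n : ℕ} (hk : 0 < k) (x y : Fin k → ℤ) (g : ℤ → EReal)
    (hx : ∀ i j : Fin k, i ≤ j → x j ≤ x i)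
    (T0 T1 t z w v : ℤ) (hT0 : 0 ≤ T0) (hT1 : T1 ≤ n) (hT : T0 < T1) (ht0 : T0 ≤ t) (ht1 : t ≤ T1)
    (hzw : z ≤ w) (q D η : ℝ) (hq : 0 ≤ q) (hD : 0 < D) (hη : 0 < η) (hη1 : η < 1)
    (hqe : (w : ℝ) - z = q * (T1 - T0)) (hsg : sg q * (T1 - T0) ≤ η / k * D ^ 2)
    (hv : (v : ℝ) ≤ w - q * (T1 - t) - k * (2 * D + q + 1))
    (hA : (1 - η) * ((Om n x y g).ncard : ℝ) ≤ ({Q ∈ Om n x y g | z ≤ Q ⟨k - 1, Nat.sub_lt hk Nat.one_pos⟩ T0 ∧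
        w ≤ Q ⟨k - 1, Nat.sub_lt hk Nat.one_pos⟩ T1}.ncard : ℝ)) :
    (1 - 2 * η) * ((Om n x y g).ncard : ℝ)
      ≤ ({Q ∈ Om n x y g | v ≤ Q ⟨k - 1, Nat.sub_lt hk Nat.one_pos⟩ t}.ncard : ℝ) := by
  have hk' : (1 : ℝ) ≤ k := by exact_mod_cast hk
  set e : Fin k := ⟨k - 1, Nat.sub_lt hk Nat.one_pos⟩ with he
  set d : ℤ := ⌈2 * D + q⌉ with hd
  have d1 : 2 * D + q ≤ (d : ℝ) := Int.le_ceil _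
  have d2 : (d : ℝ) < 2 * D + q + 1 := Int.ceil_lt_add_one _
  have hdpos : (0 : ℝ) ≤ d := by linarith
  have hηk : η / k ≤ η := div_le_self hη.le hk'
  have main := straight_tube hk x y g hx T0 T1 t z w d v hT0 hT1 hT ht0 ht1 hzw (by exact_mod_cast hdpos)
    q D (1 - η / k) hD (by linarith) ?_ (by linarith) ?_
  · have h1 := mul_le_mul_of_nonneg_right (bern k hk η hη hη1)
      (by positivity : (0 : ℝ) ≤ ({Q ∈ Om n x y g | z ≤ Q e T0 ∧ w ≤ Q e T1}.ncard : ℝ))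
    have hss : {Q ∈ Om n x y g | (z ≤ Q e T0 ∧ w ≤ Q e T1) ∧ v ≤ Q e t} ⊆ {Q ∈ Om n x y g | v ≤ Q e t} :=
      fun Q hQ => ⟨hQ.1, hQ.2.2⟩
    have h2 : ({Q ∈ Om n x y g | (z ≤ Q e T0 ∧ w ≤ Q e T1) ∧ v ≤ Q e t}.ncard : ℝ)
        ≤ ({Q ∈ Om n x y g | v ≤ Q e t}.ncard : ℝ) := by
      exact_mod_cast Set.ncard_le_ncard hss ((om_finite n x y g).subset (Set.sep_subset _ _))
    refine le_trans ?_ (h1.trans (main.trans h2))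
    have h3 := mul_le_mul_of_nonneg_left hA (by linarith : 0 ≤ 1 - η)
    refine le_trans ?_ h3
    rw [← mul_assoc]
    refine mul_le_mul_of_nonneg_right ?_ (by positivity)
    nlinarith
  · rw [hqe, sub_self]
    linarith
  · have h1 : ((k : ℝ) - 1) * d ≤ (k - 1) * (2 * D + q + 1) := mul_le_mul_of_nonneg_left d2.le (by linarith)
    linarith

set_option maxHeartbeats 2000000 in
/-- The lowest curve at time `t` is not much below a nearby value of the lower boundary. -/
lemma osc (p M Mb δ η δ2 : ℝ) (hp : 0 < p) (hM : 0 < M) (hMb : 0 < Mb) (hδ : 0 < δ) (hδ1 : δ ≤ 1)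
    (hη : 0 < η) (hη1 : η < 1) (hδ2 : 0 < δ2) (hδ2' : δ2 < 1 / 2) (k : ℕ) (hk : 0 < k) :
    ∃ Δ C0 : ℝ, 0 < Δ ∧ Δ < δ2 / 2 ∧ ∀ n : ℕ, C0 ≤ Real.sqrt n → ∀ x y : Fin k → ℤ,
      (∀ i j : Fin k, i ≤ j → x j ≤ x i) →
      (∀ i, |(x i : ℝ)| ≤ M * Real.sqrt n) → (∀ i, |(y i : ℝ) - p * n| ≤ M * Real.sqrt n) →
      ∀ g : ℤ → EReal, ∀ t s0 : ℤ, δ2 * n - 1 ≤ t → (t : ℝ) ≤ n - δ2 * n →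
      |(s0 : ℝ) - t| ≤ Δ * n + 1 →
      ∀ γ : ℝ, g s0 = (γ : EReal) → γ ≤ p * s0 + Mb * Real.sqrt n →
      ∀ v : ℤ, (v : ℝ) ≤ γ + p * (t - s0) - δ * Real.sqrt n →
      (1 - η) * ((Om n x y g).ncard : ℝ)
        ≤ ({Q ∈ Om n x y g | v ≤ Q ⟨k - 1, Nat.sub_lt hk Nat.one_pos⟩ t}.ncard : ℝ) := by
  have hk' : (1 : ℝ) ≤ k := by exact_mod_cast hk
  have hk0 : (0 : ℝ) < k := by linarith
  obtain ⟨η', hη'⟩ : ∃ η', η = 2 * η' := ⟨η / 2, by ring⟩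
  have hη'0 : 0 < η' := by linarith
  have hη'1 : η' < 1 := by linarith
  obtain ⟨R, C1, hR, HR⟩ := tightness p M η' hp hM hη'0 hη'1 k hk
  obtain ⟨b, hb⟩ : ∃ b, b = δ / (8 * k) := ⟨_, rfl⟩
  have hb0 : 0 < b := by rw [hb]; positivity
  have hkb : k * b = δ / 8 := by rw [hb]; field_simp
  have hs1 : 1 ≤ sg (p + 1) := by unfold sg; nlinarith
  obtain ⟨Δ', hΔ'⟩ : ∃ Δ', Δ' = min (δ2 / 4) (η' / k * b ^ 2 / sg (p + 1)) := ⟨_, rfl⟩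
  have hΔ'0 : 0 < Δ' := by rw [hΔ']; positivity
  have hΔ'1 : Δ' ≤ δ2 / 4 := by rw [hΔ']; exact min_le_left _ _
  have hΔ'2 : sg (p + 1) * Δ' ≤ η' / k * b ^ 2 := by
    have : Δ' ≤ η' / k * b ^ 2 / sg (p + 1) := by rw [hΔ']; exact min_le_right _ _
    rw [le_div_iff₀ (by linarith)] at this
    linarith
  obtain ⟨R', hR'⟩ : ∃ R', R' = R + Mb + p + 1 := ⟨_, rfl⟩
  have hR'1 : 1 < R' := by linarith
  obtain ⟨Δ, hΔ⟩ : ∃ Δ, Δ = Δ' * (δ / (16 * (R' + 1))) := ⟨_, rfl⟩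
  have hΔ0 : 0 < Δ := by rw [hΔ]; positivity
  have hΔR : 2 * ((R' + 1) * Δ) = δ * Δ' / 8 := by rw [hΔ]; field_simp; norm_num
  have hΔ1 : 16 * Δ ≤ Δ' := by
    have h2 : 2 * Δ ≤ (R' + 1) * Δ := mul_le_mul_of_nonneg_right (by linarith) hΔ0.le
    have h3 : δ * Δ' ≤ 1 * Δ' := mul_le_mul_of_nonneg_right hδ1 hΔ'0.le
    linarith
  refine ⟨Δ, C1 ^ 2 + 1 + 2 / Δ + 4 * k * (p + 2) / δ + 2 * (R' + 1) / Δ' + 2 * (R' + 1) / (p * Δ') + 12 / δ2,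
    hΔ0, by linarith, ?_⟩
  intro n hn x y hx hxM hyM g t s0 ht1 ht2 hst γ hγ hγ2 v hv
  have q1 : 0 < 2 / Δ := by positivity
  have q2 : 0 < 4 * k * (p + 2) / δ := by positivity
  have q3 : 0 < 2 * (R' + 1) / Δ' := by positivity
  have q4 : 0 < 2 * (R' + 1) / (p * Δ') := by positivity
  have q5 : 0 < 12 / δ2 := by positivity
  have q6 : 0 ≤ C1 ^ 2 := sq_nonneg _
  have q7 : C1 ≤ C1 ^ 2 + 1 := by nlinarith [sq_nonneg (C1 - 1)]
  specialize HR n (by linarith) x y hx hxM hyM g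
  obtain ⟨S, hS⟩ : ∃ S, S = Real.sqrt n := ⟨_, rfl⟩
  rw [← hS] at HR hn hγ2 hv
  clear hxM hyM
  have hS1 : 1 ≤ S := by linarith
  have hS0 : 0 ≤ S := by linarith
  have hSn : (n : ℝ) = S ^ 2 := by rw [hS, Real.sq_sqrt (by positivity)]
  have hSS : S ≤ S ^ 2 := le_self_pow₀ hS1 two_ne_zero
  have l1 : 2 ≤ Δ * S := by
    have : 2 / Δ ≤ S := by linarith
    rw [div_le_iff₀ hΔ0] at this; linarith
  have l2 : 4 * k * (p + 2) ≤ δ * S := by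
    have : 4 * k * (p + 2) / δ ≤ S := by linarith
    rw [div_le_iff₀ hδ] at this; linarith
  have l3 : 2 * (R' + 1) ≤ Δ' * S := by
    have : 2 * (R' + 1) / Δ' ≤ S := by linarith
    rw [div_le_iff₀ hΔ'0] at this; linarith
  have l4 : 2 * (R' + 1) ≤ p * Δ' * S := by
    have : 2 * (R' + 1) / (p * Δ') ≤ S := by linarith
    rw [div_le_iff₀ (by positivity)] at this; linarith
  have l5 : 12 ≤ δ2 * S := by
    have : 12 / δ2 ≤ S := by linarith
    rw [div_le_iff₀ hδ2] at this; linarith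
  clear hn q1 q2 q3 q4 q5 q6 q7
  have l1' : 2 ≤ Δ * n := by rw [hSn]; linarith [mul_le_mul_of_nonneg_left hSS hΔ0.le]
  have l5' : 12 ≤ δ2 * n := by rw [hSn]; linarith [mul_le_mul_of_nonneg_left hSS hδ2.le]
  have l3' : 2 * (R' + 1) * S ≤ Δ' * n := by rw [hSn]; linarith [mul_le_mul_of_nonneg_right l3 hS0]
  have l4' : 2 * (R' + 1) * S ≤ p * (Δ' * n) := by rw [hSn]; linarith [mul_le_mul_of_nonneg_right l4 hS0]
  have hn0 : (0 : ℝ) ≤ n := by positivity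
  have hd1 : 16 * (Δ * n) ≤ Δ' * n := by linarith [mul_le_mul_of_nonneg_right hΔ1 hn0]
  have hd2 : Δ' * n ≤ δ2 * n / 4 := by linarith [mul_le_mul_of_nonneg_right hΔ'1 hn0]
  obtain ⟨ℓ, hℓ⟩ : ∃ ℓ : ℤ, ℓ = ⌊Δ' * n⌋ := ⟨_, rfl⟩
  have ℓ1 : (ℓ : ℝ) ≤ Δ' * n := by rw [hℓ]; exact Int.floor_le _
  have ℓ2 : Δ' * n / 2 ≤ ℓ := by
    have := Int.lt_floor_add_one (Δ' * n)
    rw [← hℓ] at this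
    linarith
  have ℓ0 : (0 : ℝ) < ℓ := by linarith
  obtain ⟨ρ, hρ⟩ : ∃ ρ : ℝ, ρ = (R' + 1) * S / ℓ := ⟨_, rfl⟩
  have ρℓ : ρ * ℓ = (R' + 1) * S := by rw [hρ]; field_simp
  have ρ0 : 0 ≤ ρ := by rw [hρ]; positivity
  have ρ1 : ρ ≤ 1 := by rw [hρ, div_le_one ℓ0]; linarith
  have ρp : ρ ≤ p := by
    rw [hρ, div_le_iff₀ ℓ0]
    linarith [mul_le_mul_of_nonneg_left ℓ2 hp.le]
  have ρδ : ρ * (2 * (Δ * n)) ≤ δ * S / 4 := by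
    rw [hρ, div_mul_eq_mul_div, div_le_iff₀ ℓ0]
    have h1 : (R' + 1) * S * (2 * (Δ * n)) = δ * Δ' / 8 * (n * S) := by rw [← hΔR]; ring
    have h2 := mul_le_mul_of_nonneg_left ℓ2 (by positivity : 0 ≤ δ * S / 4)
    rw [h1]
    linarith
  have hst' := abs_le.1 hst
  have hs0pos : 0 < s0 := by
    have : (0 : ℝ) < s0 := by linarith
    exact_mod_cast this
  have hs0n : s0 ≤ n := by
    have : (s0 : ℝ) ≤ n := by linarith
    exact_mod_cast this
  obtain ⟨G, hG⟩ : ∃ G : ℤ, G = ⌈γ⌉ := ⟨_, rfl⟩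
  have G1 : γ ≤ G := by rw [hG]; exact Int.le_ceil _
  have G2 : (G : ℝ) < γ + 1 := by rw [hG]; exact Int.ceil_lt_add_one _
  have hGQ : ∀ Q ∈ Om n x y g, G ≤ Q ⟨k - 1, Nat.sub_lt hk Nat.one_pos⟩ (s0 - 1) := by
    intro Q hQ
    have := (mem_om.1 hQ).2.2.2.2 s0 hs0pos hs0n ⟨k - 1, Nat.sub_lt hk Nat.one_pos⟩ rfl
    rw [hγ, EReal.coe_le_coe_iff] at this
    rw [hG]
    exact Int.ceil_le.2 this
  have hsgq : ∀ q, 0 ≤ q → q ≤ p + 1 → sg q * ℓ ≤ η' / k * (b * S) ^ 2 := by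
    intro q h1 h2
    calc sg q * ℓ ≤ sg (p + 1) * (Δ' * n) := mul_le_mul (sg_mono h1 h2) ℓ1 ℓ0.le (by linarith)
      _ = sg (p + 1) * Δ' * S ^ 2 := by rw [hSn]; ring
      _ ≤ η' / k * b ^ 2 * S ^ 2 := mul_le_mul_of_nonneg_right hΔ'2 (sq_nonneg _)
      _ = _ := by ring
  have hloss : ∀ q, q ≤ p + 1 → k * (2 * (b * S) + q + 1) ≤ δ * S / 2 := by
    intro q hq
    have h1 : k * (2 * (b * S) + q + 1) ≤ k * (2 * (b * S) + (p + 1) + 1) :=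
      mul_le_mul_of_nonneg_left (by linarith) hk0.le
    have h2 : k * (2 * (b * S) + (p + 1) + 1) = 2 * (k * b) * S + k * (p + 2) := by ring
    rw [h2, hkb] at h1
    linarith
  have ℓ0' : 0 < ℓ := by exact_mod_cast ℓ0
  have hbS : 0 < b * S := by positivity
  have hRS : p + 1 + Mb * S + R * S ≤ R' * S := by
    rw [hR']
    have : p + 1 ≤ (p + 1) * S := le_mul_of_one_le_right (by linarith) hS1
    linarith
  rw [hη']
  rcases le_or_gt (s0 - 1) t with hc | hc
  · -- the boundary point lies to the left
    obtain ⟨w, hw⟩ : ∃ w : ℤ, w = ⌊G + p * ℓ - R' * S⌋ := ⟨_, rfl⟩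
    have w1 : (w : ℝ) ≤ G + p * ℓ - R' * S := by rw [hw]; exact Int.floor_le _
    have w2 : (G : ℝ) + p * ℓ - (R' + 1) * S ≤ w := by
      have := Int.lt_floor_add_one (G + p * ℓ - R' * S)
      rw [← hw] at this
      linarith
    obtain ⟨q, hq⟩ : ∃ q : ℝ, q = (w - G) / ℓ := ⟨_, rfl⟩
    have hqe : (w : ℝ) - G = q * ℓ := by rw [hq]; field_simp
    have qlo : p - ρ ≤ q := by
      rw [hq, le_div_iff₀ ℓ0]; linarith
    have qhi : q ≤ p := by
      rw [hq, div_le_iff₀ ℓ0]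
      have : 0 ≤ R' * S := by positivity
      linarith
    have hGw : G ≤ w := by
      have h1 : 0 ≤ q * ℓ := mul_nonneg (by linarith) ℓ0.le
      have : (G : ℝ) ≤ w := by linarith
      exact_mod_cast this
    have htT : t ≤ s0 - 1 + ℓ := by
      have : (t : ℝ) ≤ s0 - 1 + ℓ := by linarith
      exact_mod_cast this
    have hTn : s0 - 1 + ℓ ≤ n := by
      have : (s0 : ℝ) - 1 + ℓ ≤ n := by linarith
      exact_mod_cast this
    have hc' : (s0 : ℝ) - 1 ≤ t := by exact_mod_cast hc
    refine osc_step hk x y g hx (s0 - 1) (s0 - 1 + ℓ) t G w v (by omega) hTn (by omega) hc htT hGw q (b * S) η'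
      (by linarith) hbS hη'0 hη'1 ?_ ?_ ?_ ?_
    · push_cast; rw [hqe]; ring
    · have := hsgq q (by linarith) (by linarith)
      push_cast
      rwa [add_sub_cancel_left]
    · have h1 := hloss q (by linarith)
      have h2 : (p - ρ) * (t - (s0 - 1)) ≤ q * (t - (s0 - 1)) := mul_le_mul_of_nonneg_right qlo (by linarith)
      have h3 : ρ * (t - (s0 - 1)) ≤ ρ * (2 * (Δ * n)) := mul_le_mul_of_nonneg_left (by linarith) ρ0
      have h4 : (w : ℝ) - q * (((s0 - 1 + ℓ : ℤ) : ℝ) - t) = G + q * (t - (s0 - 1)) := by push_cast; linarith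
      rw [h4]
      have : 0 ≤ δ * S := by positivity
      linarith
    · refine (HR (s0 - 1 + ℓ) (by omega) hTn w ?_).trans ?_
      · push_cast; linarith
      · have hss : {Q ∈ Om n x y g | w ≤ Q ⟨k - 1, Nat.sub_lt hk Nat.one_pos⟩ (s0 - 1 + ℓ)} ⊆
            {Q ∈ Om n x y g | G ≤ Q ⟨k - 1, Nat.sub_lt hk Nat.one_pos⟩ (s0 - 1) ∧
              w ≤ Q ⟨k - 1, Nat.sub_lt hk Nat.one_pos⟩ (s0 - 1 + ℓ)} :=
          fun Q hQ => ⟨hQ.1, hGQ Q hQ.1, hQ.2⟩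
        exact_mod_cast Set.ncard_le_ncard hss ((om_finite n x y g).subset (Set.sep_subset _ _))
  · -- the boundary point lies to the right
    obtain ⟨z, hz⟩ : ∃ z : ℤ, z = ⌊G - p * ℓ - R' * S⌋ := ⟨_, rfl⟩
    have w1 : (z : ℝ) ≤ G - p * ℓ - R' * S := by rw [hz]; exact Int.floor_le _
    have w2 : (G : ℝ) - p * ℓ - (R' + 1) * S ≤ z := by
      have := Int.lt_floor_add_one (G - p * ℓ - R' * S)
      rw [← hz] at this
      linarith
    obtain ⟨q, hq⟩ : ∃ q : ℝ, q = (G - z) / ℓ := ⟨_, rfl⟩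
    have hqe : (G : ℝ) - z = q * ℓ := by rw [hq]; field_simp
    have qhi : q ≤ p + ρ := by
      rw [hq, div_le_iff₀ ℓ0]; linarith
    have qlo : p ≤ q := by
      rw [hq, le_div_iff₀ ℓ0]
      have : 0 ≤ R' * S := by positivity
      linarith
    have hGw : z ≤ G := by
      have h1 : 0 ≤ q * ℓ := mul_nonneg (by linarith) ℓ0.le
      have : (z : ℝ) ≤ G := by linarith
      exact_mod_cast this
    have htT : s0 - 1 - ℓ ≤ t := by
      have : (s0 : ℝ) - 1 - ℓ ≤ t := by linarith
      exact_mod_cast this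
    have hc' : (t : ℝ) < s0 - 1 := by exact_mod_cast hc
    have hTn : 0 ≤ s0 - 1 - ℓ := by
      have : (0 : ℝ) ≤ s0 - 1 - ℓ := by linarith
      exact_mod_cast this
    refine osc_step hk x y g hx (s0 - 1 - ℓ) (s0 - 1) t z G v hTn (by omega) (by omega) htT hc.le hGw q (b * S) η'
      (by linarith) hbS hη'0 hη'1 ?_ ?_ ?_ ?_
    · push_cast; rw [hqe]; ring
    · have := hsgq q (by linarith) (by linarith)
      push_cast
      rwa [sub_sub_cancel]
    · have h1 := hloss q (by linarith)
      have h2 : q * (s0 - 1 - t) ≤ (p + ρ) * (s0 - 1 - t) := mul_le_mul_of_nonneg_right qhi (by linarith)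
      have h3 : ρ * (s0 - 1 - t) ≤ ρ * (2 * (Δ * n)) := mul_le_mul_of_nonneg_left (by linarith) ρ0
      push_cast
      have : 0 ≤ δ * S := by positivity
      linarith
    · refine (HR (s0 - 1 - ℓ) hTn (by omega) z ?_).trans ?_
      · push_cast; linarith
      · have hss : {Q ∈ Om n x y g | z ≤ Q ⟨k - 1, Nat.sub_lt hk Nat.one_pos⟩ (s0 - 1 - ℓ)} ⊆
            {Q ∈ Om n x y g | z ≤ Q ⟨k - 1, Nat.sub_lt hk Nat.one_pos⟩ (s0 - 1 - ℓ) ∧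
              G ≤ Q ⟨k - 1, Nat.sub_lt hk Nat.one_pos⟩ (s0 - 1)} :=
          fun Q hQ => ⟨hQ.1, hQ.2, hGQ Q hQ.1⟩
        exact_mod_cast Set.ncard_le_ncard hss ((om_finite n x y g).subset (Set.sep_subset _ _))


/-! ### Conclusion -/

lemma unif_prob {E Ω : Type*} [MeasurableSpace Ω] (P : Measure Ω) [IsProbabilityMeasure P] (X : Ω → E)
    (A : Set E) (hA : A.Finite) (hne : A.Nonempty) (hU : UniformOn P X A) (G : E → Prop) (a : ℝ) (ha : 0 ≤ a)
    (h : (1 - a) * (A.ncard : ℝ) ≤ ({q ∈ A | G q}.ncard : ℝ)) :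
    ENNReal.ofReal (1 - a) ≤ P {ω | G (X ω)} := by
  classical
  have hApos : 0 < A.ncard := (Set.ncard_pos hA).2 hne
  have hbadfin : {q ∈ A | ¬ G q}.Finite := hA.subset (Set.sep_subset _ _)
  have hcard : {q ∈ A | G q}.ncard + {q ∈ A | ¬ G q}.ncard = A.ncard := by
    rw [← Set.ncard_union_eq _ (hA.subset (Set.sep_subset _ _)) hbadfin]
    · congr 1
      ext q
      simp only [Set.mem_union, Set.mem_ofPred_eq]
      tauto
    · rw [Set.disjoint_left]
      rintro q ⟨_, h1⟩ ⟨_, h2⟩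
      exact h2 h1
  have hbad : P {ω | ¬ G (X ω)} ≤ ENNReal.ofReal a := by
    have hsub : {ω | ¬ G (X ω)} ⊆ ⋃ q ∈ hbadfin.toFinset, {ω | X ω = q} := by
      intro ω hω
      simp only [Set.mem_iUnion]
      exact ⟨X ω, by simpa using ⟨hU.1 ω, hω⟩, rfl⟩
    calc P {ω | ¬ G (X ω)} ≤ P (⋃ q ∈ hbadfin.toFinset, {ω | X ω = q}) := measure_mono hsub
      _ ≤ ∑ q ∈ hbadfin.toFinset, P {ω | X ω = q} := measure_biUnion_finset_le _ _
      _ = ∑ q ∈ hbadfin.toFinset, ((A.ncard : ℝ≥0∞))⁻¹ := by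
        refine Finset.sum_congr rfl fun q hq => ?_
        rw [hU.2 q ((Set.Finite.mem_toFinset _).1 hq).1, Nat.card_coe_set_eq]
      _ = ({q ∈ A | ¬ G q}.ncard : ℝ≥0∞) * ((A.ncard : ℝ≥0∞))⁻¹ := by
        rw [Finset.sum_const, nsmul_eq_mul, Set.ncard_eq_toFinset_card _ hbadfin]
      _ = ENNReal.ofReal (({q ∈ A | ¬ G q}.ncard : ℝ) / A.ncard) := by
        rw [ENNReal.ofReal_div_of_pos (by exact_mod_cast hApos), ENNReal.ofReal_natCast, ENNReal.ofReal_natCast,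
          div_eq_mul_inv]
      _ ≤ _ := by
        apply ENNReal.ofReal_le_ofReal
        rw [div_le_iff₀ (by exact_mod_cast hApos)]
        have : (({q ∈ A | G q}.ncard : ℝ)) + ({q ∈ A | ¬ G q}.ncard : ℝ) = A.ncard := by exact_mod_cast hcard
        linarith
  rw [ENNReal.ofReal_sub _ ha, ENNReal.ofReal_one, tsub_le_iff_right]
  calc (1 : ℝ≥0∞) = P Set.univ := measure_univ.symm
    _ ≤ P ({ω | G (X ω)} ∪ {ω | ¬ G (X ω)}) := measure_mono fun ω _ => by
        by_cases hω : G (X ω)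
        · exact Or.inl hω
        · exact Or.inr hω
    _ ≤ P {ω | G (X ω)} + P {ω | ¬ G (X ω)} := measure_union_le _ _
    _ ≤ _ := by gcongr

lemma lc_iter (F : ℤ → ℝ) (hF : ∀ v, 0 ≤ F v) (v : ℤ)
    (h : ∀ c : ℕ, F v * F (v + 2 * c) ≤ F (v + c) * F (v + c)) (l : ℕ) :
    ∀ c : ℕ, F v ^ (2 ^ l - 1) * F (v + 2 ^ l * c) ≤ F (v + c) ^ (2 ^ l) := by
  induction l with
  | zero => intro c; simp
  | succ l ih =>
    intro c
    have h1 := ih (2 * c)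
    have h2 := h c
    have e1 : v + 2 ^ l * ((2 * c : ℕ) : ℤ) = v + 2 ^ (l + 1) * c := by push_cast; ring
    have e2 : v + ((2 * c : ℕ) : ℤ) = v + 2 * c := by push_cast; ring
    rw [e1, e2] at h1
    have hpos : 1 ≤ 2 ^ l := Nat.one_le_two_pow
    have e3 : 2 ^ (l + 1) - 1 = 2 ^ l + (2 ^ l - 1) := by rw [pow_succ]; omega
    rw [e3, pow_add, mul_assoc]
    calc F v ^ 2 ^ l * (F v ^ (2 ^ l - 1) * F (v + 2 ^ (l + 1) * c))
        ≤ F v ^ 2 ^ l * F (v + 2 * c) ^ 2 ^ l := mul_le_mul_of_nonneg_left h1 (pow_nonneg (hF _) _)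
      _ = (F v * F (v + 2 * c)) ^ 2 ^ l := by rw [mul_pow]
      _ ≤ (F (v + c) * F (v + c)) ^ 2 ^ l := pow_le_pow_left₀ (mul_nonneg (hF _) (hF _)) h2 _
      _ = _ := by rw [pow_succ, mul_comm (2 ^ l) 2, pow_mul, sq]

lemma lc_final (A B X N η ε : ℝ) (l : ℕ) (hN : 0 ≤ N) (hη0 : 0 ≤ η) (hη : η ≤ 1) (hX : 0 ≤ X) (hε0 : 0 ≤ ε)
    (hA : (1 - η) * N ≤ A) (hB : ε * N ≤ B) (hε : (1 - η) ^ (2 ^ l) ≤ ε)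
    (h : A ^ (2 ^ l - 1) * B ≤ X ^ (2 ^ l)) : (1 - 2 * η) * N ≤ X := by
  have hη' : 0 ≤ 1 - η := by linarith
  have hA0 : 0 ≤ A := le_trans (mul_nonneg hη' hN) hA
  have hpos : 1 ≤ 2 ^ l := Nat.one_le_two_pow
  have h1 : ((1 - η) * (1 - η) * N) ^ (2 ^ l) ≤ X ^ (2 ^ l) := by
    refine le_trans ?_ h
    calc ((1 - η) * (1 - η) * N) ^ (2 ^ l) = (1 - η) ^ (2 ^ l) * (1 - η) ^ (2 ^ l) * N ^ (2 ^ l) := by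
          rw [mul_pow, mul_pow]
      _ ≤ (1 - η) ^ (2 ^ l - 1) * ε * N ^ (2 ^ l) := by
        have := pow_le_pow_of_le_one hη' (by linarith : 1 - η ≤ 1) (Nat.sub_le (2 ^ l) 1)
        gcongr
      _ = ((1 - η) * N) ^ (2 ^ l - 1) * (ε * N) := by
        have e : N ^ (2 ^ l) = N ^ (2 ^ l - 1) * N := by
          rw [← pow_succ]; congr 1; omega
        rw [e, mul_pow]; ring
      _ ≤ _ := by gcongr
  have h2 : (1 - η) * (1 - η) * N ≤ X := le_of_pow_le_pow_left₀ (by positivity) hX h1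
  refine le_trans (mul_le_mul_of_nonneg_right ?_ hN) h2
  nlinarith [sq_nonneg η]

/-- (Lemma 4.1, bottom boundary separation.) With high probability, the lowest curve of an
interlacing ensemble at time `t0·n` is separated by `δ^sep·√n` from the (recentered) bottom
boundary `g` over a macroscopic window of radius `Δ^sep·n` around `t0·n`. -/
theorem bottom_boundary_separation
    (p η Mbot Mside : ℝ) (hp : 0 < p) (hη : 0 < η) (hMbot : 0 < Mbot) (hMside : 0 < Mside)
    (k : ℕ) (hk : 0 < k) (δ2 : ℝ) (hδ2 : δ2 ∈ Set.Ioo (0 : ℝ) (1 / 2)) :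
    ∃ (N5 : ℕ) (δsep Δsep : ℝ), 0 < δsep ∧ Δsep ∈ Set.Ioo 0 δ2 ∧
      ∀ n : ℕ, N5 ≤ n →
      ∀ x y : Fin k → ℤ,
        (∀ i j : Fin k, i ≤ j → x j ≤ x i) → (∀ i j : Fin k, i ≤ j → y j ≤ y i) →
        (∀ i, |(x i : ℝ)| ≤ Mside * Real.sqrt n) →
        (∀ i, |(y i : ℝ) - p * n| ≤ Mside * Real.sqrt n) →
      ∀ g : ℤ → EReal, (∀ s : ℤ, 0 ≤ s → s ≤ n → g s ≠ ⊤) →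
        (∀ s : ℤ, 0 ≤ s → s ≤ n →
          g s ≤ ((p * s + Mbot * Real.sqrt n : ℝ) : EReal)) →
        (OmegaInter 0 n x y (fun _ => (⊤ : EReal)) g).Nonempty →
      ∀ t0 ∈ Set.Icc δ2 (1 - δ2),
      ∀ (Ω : Type) (_ : MeasurableSpace Ω) (P : Measure Ω), IsProbabilityMeasure P →
      ∀ Q : Ω → Fin k → ℤ → ℤ,
        UniformOn P Q (OmegaInter 0 n x y (fun _ => (⊤ : EReal)) g) →
        ENNReal.ofReal (1 - η) <
          P {ω | ∀ s : ℤ, t0 * n - Δsep * n ≤ (s : ℝ) → (s : ℝ) ≤ t0 * n + Δsep * n →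
            g s ≤ ((interpZ (Q ω ⟨k - 1, Nat.sub_lt hk Nat.one_pos⟩) (t0 * n)
              - p * t0 * n + p * s - δsep * Real.sqrt n : ℝ) : EReal)} := by
  obtain ⟨hδ2a, hδ2b⟩ := hδ2
  obtain ⟨η', hη'⟩ : ∃ η', η' = min η (1 / 2) / 4 := ⟨_, rfl⟩
  have hη'0 : 0 < η' := by rw [hη']; positivity
  have hη'1 : η' ≤ 1 / 8 := by
    rw [hη']
    linarith [min_le_right η (1 / 2)]
  have hη'2 : 2 * η' < η := by
    rw [hη']
    linarith [min_le_left η (1 / 2)]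
  obtain ⟨ε, C1, hε, Hraise⟩ := raise p Mside (δ2 / 2) (Mbot + 1) hp hMside (by linarith) (by linarith) k hk
  obtain ⟨l, hl⟩ := exists_pow_lt_of_lt_one hε (by linarith : 1 - η' < 1)
  have hlε : (1 - η') ^ (2 ^ l) ≤ ε :=
    (pow_le_pow_of_le_one (by linarith) (by linarith) Nat.lt_two_pow_self.le).trans hl.le
  obtain ⟨L, hL⟩ : ∃ L : ℝ, L = 2 ^ l := ⟨_, rfl⟩
  have hL1 : 1 ≤ L := by rw [hL]; exact one_le_pow₀ (by norm_num)
  obtain ⟨δ, hδ⟩ : ∃ δ : ℝ, δ = 1 / (8 * L) := ⟨_, rfl⟩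
  have hδ0 : 0 < δ := by rw [hδ]; positivity
  have hLδ : L * δ = 1 / 8 := by rw [hδ]; field_simp
  have hδ1 : δ ≤ 1 := by
    have : 1 * δ ≤ L * δ := mul_le_mul_of_nonneg_right hL1 hδ0.le
    linarith
  obtain ⟨Δ, C2, hΔ0, hΔ1, Hosc⟩ := osc p Mside Mbot δ η' δ2 hp hMside hMbot hδ0 hδ1 hη'0 (by linarith) hδ2a hδ2b k hk
  obtain ⟨C0, hC0⟩ : ∃ C0 : ℝ, C0 = |C1| + |C2| + 1 + 2 * L + (1 + p) / δ + 2 / δ2 := ⟨_, rfl⟩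
  refine ⟨⌈C0 ^ 2⌉₊, δ, Δ, hδ0, ⟨hΔ0, by linarith⟩, ?_⟩
  intro n hn x y hx hy hxM hyM g hgtop hg hne t0 ht0 Ω _ P hP Q hU
  have q1 : 0 < (1 + p) / δ := by positivity
  have q2 : 0 < 2 / δ2 := by positivity
  have q3 := abs_nonneg C1
  have q4 := abs_nonneg C2
  have q5 := le_abs_self C1
  have q6 := le_abs_self C2
  have hC0S : C0 ≤ Real.sqrt n := by
    apply Real.le_sqrt_of_sq_le
    exact (Nat.le_ceil _).trans (by exact_mod_cast hn)
  specialize Hraise n (by linarith) x y hx hxM hyM g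
  specialize Hosc n (by linarith) x y hx hxM hyM g
  obtain ⟨S, hS⟩ : ∃ S, S = Real.sqrt n := ⟨_, rfl⟩
  rw [← hS] at Hraise Hosc hC0S hg ⊢
  clear hxM hyM
  have hS1 : 1 ≤ S := by linarith
  have hS0 : 0 ≤ S := by linarith
  have hSn : (n : ℝ) = S ^ 2 := by rw [hS, Real.sq_sqrt (by positivity)]
  have hSS : S ≤ S ^ 2 := le_self_pow₀ hS1 two_ne_zero
  have l1 : 1 + p ≤ δ * S := by
    have : (1 + p) / δ ≤ S := by linarith
    rw [div_le_iff₀ hδ0] at this; linarith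
  have l2 : 2 ≤ δ2 * n := by
    have : 2 / δ2 ≤ S := by linarith
    rw [div_le_iff₀ hδ2a] at this
    rw [hSn]
    linarith [mul_le_mul_of_nonneg_left hSS hδ2a.le]
  have l3 : 2 * L ≤ S := by linarith
  clear q1 q2 q3 q4 q5 q6 hC0S hC0
  have hn0 : (0 : ℝ) ≤ n := by positivity
  obtain ⟨ht0a, ht0b⟩ := ht0
  have u1 : δ2 * n ≤ t0 * n := mul_le_mul_of_nonneg_right ht0a hn0
  have u2 : t0 * n ≤ n - δ2 * n := by linarith [mul_le_mul_of_nonneg_right ht0b hn0]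
  have u3 : Δ * n ≤ δ2 * n / 2 := by linarith [mul_le_mul_of_nonneg_right hΔ1.le hn0]
  set e : Fin k := ⟨k - 1, Nat.sub_lt hk Nat.one_pos⟩ with he
  -- reduction to counting
  suffices key : (1 - 2 * η') * ((Om n x y g).ncard : ℝ) ≤
      ({q ∈ Om n x y g | ∀ s : ℤ, t0 * n - Δ * n ≤ (s : ℝ) → (s : ℝ) ≤ t0 * n + Δ * n →
            g s ≤ ((interpZ (q e) (t0 * n) - p * t0 * n + p * s - δ * S : ℝ) : EReal)}.ncard : ℝ) by
    have := unif_prob P Q (Om n x y g) (om_finite n x y g) hne hU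
      (fun q => ∀ s : ℤ, t0 * n - Δ * n ≤ (s : ℝ) → (s : ℝ) ≤ t0 * n + Δ * n →
            g s ≤ ((interpZ (q e) (t0 * n) - p * t0 * n + p * s - δ * S : ℝ) : EReal)) (2 * η') (by linarith) key
    refine lt_of_lt_of_le ?_ this
    rw [ENNReal.ofReal_lt_ofReal_iff (by linarith)]
    linarith
  have hN0 : (0 : ℝ) ≤ (Om n x y g).ncard := by positivity
  have hrange : ∀ s : ℤ, t0 * n - Δ * n ≤ (s : ℝ) → (s : ℝ) ≤ t0 * n + Δ * n → 0 ≤ s ∧ s ≤ n := by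
    intro s h1 h2
    constructor
    · have : (0 : ℝ) ≤ s := by linarith
      exact_mod_cast this
    · have : (s : ℝ) ≤ n := by linarith
      exact_mod_cast this
  set W : Set ℤ := {s : ℤ | (t0 * n - Δ * n ≤ (s : ℝ) ∧ (s : ℝ) ≤ t0 * n + Δ * n) ∧ g s ≠ ⊥} with hW
  have hWfin : W.Finite := (Set.finite_Icc (0 : ℤ) n).subset fun s hs => hrange s hs.1.1 hs.1.2
  rcases W.eq_empty_or_nonempty with hWe | hWne
  · have : {q ∈ Om n x y g | ∀ s : ℤ, t0 * n - Δ * n ≤ (s : ℝ) → (s : ℝ) ≤ t0 * n + Δ * n →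
            g s ≤ ((interpZ (q e) (t0 * n) - p * t0 * n + p * s - δ * S : ℝ) : EReal)} = Om n x y g := by
      refine Set.sep_eq_self_iff_mem_true.2 ?_
      intro q _ s h1 h2
      have : g s = ⊥ := by
        by_contra hs
        have : s ∈ W := ⟨⟨h1, h2⟩, hs⟩
        rw [hWe] at this
        exact this
      rw [this]
      exact bot_le
    rw [this]
    exact mul_le_of_le_one_left hN0 (by linarith)
  obtain ⟨s0, hs0, hmax⟩ := Set.exists_max_image W (fun s => (g s).toReal - p * s) hWfin hWne
  have hs0r := hrange s0 hs0.1.1 hs0.1.2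
  obtain ⟨γ, hγ⟩ : ∃ γ : ℝ, γ = (g s0).toReal := ⟨_, rfl⟩
  have hγ1 : g s0 = (γ : EReal) := by
    rw [hγ]; exact (EReal.coe_toReal (hgtop s0 hs0r.1 hs0r.2) hs0.2).symm
  have hγ2 : γ ≤ p * s0 + Mbot * S := by
    have := hg s0 hs0r.1 hs0r.2
    rwa [hγ1, EReal.coe_le_coe_iff] at this
  obtain ⟨t, ht⟩ : ∃ t : ℤ, t = ⌊t0 * n⌋ := ⟨_, rfl⟩
  have t1 : (t : ℝ) ≤ t0 * n := by rw [ht]; exact Int.floor_le _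
  have t2 : t0 * n < t + 1 := by rw [ht]; exact Int.lt_floor_add_one _
  obtain ⟨v, hv⟩ : ∃ v : ℤ, v = ⌊γ + p * (t - s0) - δ * S⌋ := ⟨_, rfl⟩
  have v1 : (v : ℝ) ≤ γ + p * (t - s0) - δ * S := by rw [hv]; exact Int.floor_le _
  have v2 : γ + p * (t - s0) - δ * S < v + 1 := by rw [hv]; exact Int.lt_floor_add_one _
  obtain ⟨c, hc⟩ : ∃ c : ℕ, c = ⌈3 * (δ * S)⌉₊ := ⟨_, rfl⟩
  have c1 : 3 * (δ * S) ≤ c := by rw [hc]; exact Nat.le_ceil _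
  have c2 : (c : ℝ) < 3 * (δ * S) + 1 := by rw [hc]; exact Nat.ceil_lt_add_one (by positivity)
  have A1 := Hosc t s0 (by linarith) (by linarith)
    (by rw [abs_le]; constructor <;> linarith [hs0.1.1, hs0.1.2]) γ hγ1 hγ2 v v1
  have A2 := Hraise t (by linarith) (by linarith) (v + 2 ^ l * c) (by
    push_cast
    rw [← hL]
    have h1 : L * c ≤ L * (3 * (δ * S) + 1) := mul_le_mul_of_nonneg_left c2.le (by linarith)
    have h2 : L * (3 * (δ * S) + 1) = 3 * (L * δ) * S + L := by ring
    rw [h2, hLδ] at h1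
    have h3 : 0 ≤ δ * S := by positivity
    linarith)
  have A3 := lc_iter (fun v => ({Q ∈ Om n x y g | v ≤ Q e t}.ncard : ℝ)) (fun v => by positivity) v
    (fun c => by exact_mod_cast log_concave x y g e t v c) l c
  have A4 := lc_final _ _ _ _ η' ε l hN0 hη'0.le (by linarith) (by positivity) hε.le A1 A2 hlε A3
  refine A4.trans ?_
  have hss : {Q ∈ Om n x y g | v + c ≤ Q e t} ⊆
      {q ∈ Om n x y g | ∀ s : ℤ, t0 * n - Δ * n ≤ (s : ℝ) → (s : ℝ) ≤ t0 * n + Δ * n →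
            g s ≤ ((interpZ (q e) (t0 * n) - p * t0 * n + p * s - δ * S : ℝ) : EReal)} := by
    rintro q ⟨hq, hqv⟩
    refine ⟨hq, fun s h1 h2 => ?_⟩
    by_cases hs : g s = ⊥
    · rw [hs]; exact bot_le
    have hsr := hrange s h1 h2
    rw [← EReal.coe_toReal (hgtop s hsr.1 hsr.2) hs, EReal.coe_le_coe_iff]
    have hm : (g s).toReal - p * s ≤ (g s0).toReal - p * s0 := hmax s ⟨⟨h1, h2⟩, hs⟩
    rw [← hγ] at hm
    have hinterp : (q e t : ℝ) ≤ interpZ (q e) (t0 * n) := by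
      unfold interpZ interp
      rw [← ht]
      have hmono : (q e t : ℝ) ≤ q e (t + 1) := by
        exact_mod_cast incr_mono ((mem_om.1 hq).1 e) (by omega)
      have : 0 ≤ (t0 * n - t) * ((q e (t + 1) : ℝ) - q e t) := mul_nonneg (by linarith) (by linarith)
      linarith
    have hqv' : (v : ℝ) + c ≤ q e t := by exact_mod_cast hqv
    have hpt : p * (t0 * n) ≤ p * (t + 1) := mul_le_mul_of_nonneg_left t2.le hp.le
    linarith
  exact_mod_cast Set.ncard_le_ncard hss ((om_finite n x y g).subset (Set.sep_subset _ _))
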